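/- arXiv:2110.13997 — 3 statements merged into one kernel-verified Lean document; each statement's English description precedes it below -/
import Mathlib

section
/- For every positive integer d, r₂₄(d) > 0 if and only if d mod 16 ∉ {0, 7, 12, 15}. -/
/-- `r₂₄(n)`: half the number of vectors `(a,b,c,d,e,f) ∈ ℤ⁶` with
`gcd(a,b,c,d,e,f) = 1`, `af − be + cd = 0` and `a²+b²+c²+d²+e²+f² = n`. -/
noncomputable def r24 (n : ℕ) : ℚ :=
  (Nat.card {w : Fin 6 → ℤ //
    Finset.univ.gcd w = 1 ∧
    w 0 * w 5 - w 1 * w 4 + w 2 * w 3 = 0 ∧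
    (w 0) ^ 2 + (w 1) ^ 2 + (w 2) ^ 2 + (w 3) ^ 2 + (w 4) ^ 2 + (w 5) ^ 2 = (n : ℤ)} : ℚ) / 2

/-- Every integer has a residue modulo `m` of absolute value at most `m / 2`. -/
theorem exists_abs_two_mul_add_mul_le (x m : ℤ) (hm : 0 < m) :
    ∃ k : ℤ, |2 * (x + k * m)| ≤ m := by
  refine ⟨-((2 * x + m) / (2 * m)), ?_⟩
  have h1 := Int.emod_add_mul_ediv (2 * x + m) (2 * m)
  have h2 := Int.emod_nonneg (2 * x + m) (b := 2 * m) (by omega)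
  have h3 := Int.emod_lt_of_pos (2 * x + m) (b := 2 * m) (by omega)
  rw [abs_le]
  constructor <;> linarith

/-- A positive definite integral ternary form of determinant `1`, with Gram matrix
`!![a, t, s; t, b, r; s, r, c]`, is the Gram matrix of three vectors of `ℤ³`. -/
theorem exists_vectors_of_ternary_det_one (a b c r s t : ℤ) (ha : 0 < a)
    (hB : 0 < a * b - t ^ 2)
    (hdet : a * b * c + 2 * r * s * t - a * r ^ 2 - b * s ^ 2 - c * t ^ 2 = 1) :
    ∃ u₁ u₂ u₃ v₁ v₂ v₃ w₁ w₂ w₃ : ℤ,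
      u₁ * u₁ + u₂ * u₂ + u₃ * u₃ = a ∧ v₁ * v₁ + v₂ * v₂ + v₃ * v₃ = b ∧
      w₁ * w₁ + w₂ * w₂ + w₃ * w₃ = c ∧ v₁ * w₁ + v₂ * w₂ + v₃ * w₃ = r ∧
      u₁ * w₁ + u₂ * w₂ + u₃ * w₃ = s ∧ u₁ * v₁ + u₂ * v₂ + u₃ * v₃ = t := by
  obtain ⟨k, hk⟩ := exists_abs_two_mul_add_mul_le t a ha
  obtain ⟨l, hl⟩ := exists_abs_two_mul_add_mul_le
    (a * (r + k * s) - s * (t + k * a)) (a * b - t ^ 2) hB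
  -- shift the second basis vector by `k` times the first, then the third by `l` times the second
  obtain ⟨t', ht'⟩ : ∃ t', t' = t + k * a := ⟨_, rfl⟩
  obtain ⟨b', hb'⟩ : ∃ b', b' = b + 2 * k * t + k ^ 2 * a := ⟨_, rfl⟩
  obtain ⟨s', hs'⟩ : ∃ s', s' = s + l * t' := ⟨_, rfl⟩
  obtain ⟨r', hr'⟩ : ∃ r', r' = r + k * s + l * b' := ⟨_, rfl⟩
  obtain ⟨c', hc'⟩ : ∃ c', c' = c + 2 * l * (r + k * s) + l ^ 2 * b' := ⟨_, rfl⟩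
  have hB_eq : a * b' - t' ^ 2 = a * b - t ^ 2 := by subst ht' hb'; ring
  have hdet' : a * b' * c' + 2 * r' * s' * t' - a * r' ^ 2 - b' * s' ^ 2 - c' * t' ^ 2 = 1 := by
    rw [← hdet]; subst hs' hr' hc' ht' hb'; ring
  have hR : |2 * (a * r' - s' * t')| ≤ a * b' - t' ^ 2 := by
    rw [hB_eq]; refine le_of_eq_of_le ?_ hl; congr 1; subst hs' hr' ht' hb'; ring
  rw [← ht'] at hk
  have hB' : 0 < a * b' - t' ^ 2 := hB_eq ▸ hB
  suffices h : ∃ u₁ u₂ u₃ v₁ v₂ v₃ w₁ w₂ w₃ : ℤ,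
      u₁ * u₁ + u₂ * u₂ + u₃ * u₃ = a ∧ v₁ * v₁ + v₂ * v₂ + v₃ * v₃ = b' ∧
      w₁ * w₁ + w₂ * w₂ + w₃ * w₃ = c' ∧ v₁ * w₁ + v₂ * w₂ + v₃ * w₃ = r' ∧
      u₁ * w₁ + u₂ * w₂ + u₃ * w₃ = s' ∧ u₁ * v₁ + u₂ * v₂ + u₃ * v₃ = t' by
    obtain ⟨u₁, u₂, u₃, v₁, v₂, v₃, w₁, w₂, w₃, h1, h2, h3, h4, h5, h6⟩ := h
    refine ⟨u₁, u₂, u₃, v₁ - k * u₁, v₂ - k * u₂, v₃ - k * u₃,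
      w₁ - l * v₁, w₂ - l * v₂, w₃ - l * v₃, h1, ?_, ?_, ?_, ?_, ?_⟩
    · linear_combination h2 - 2 * k * h6 + k ^ 2 * h1 + hb' - 2 * k * ht'
    · linear_combination h3 - 2 * l * h4 + l ^ 2 * h2 + hc' - 2 * l * hr'
    · linear_combination h4 - k * h5 - l * h2 + k * l * h6 + hr' - k * hs'
    · linear_combination h5 - l * h6 + hs'
    · linear_combination h6 - k * h1 + ht'
  have hb'_pos : 0 < b' := by nlinarith [sq_nonneg t']
  have hBC : (a * b' - t' ^ 2) * (a * c' - s' ^ 2) = (a * r' - s' * t') ^ 2 + a := by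
    linear_combination a * hdet'
  have hC : 0 < a * c' - s' ^ 2 := by
    refine pos_of_mul_pos_right (a := a * b' - t' ^ 2) ?_ hB'.le
    rw [hBC]; positivity
  rcases lt_or_ge b' a with hba | hab
  · obtain ⟨u₁, u₂, u₃, v₁, v₂, v₃, w₁, w₂, w₃, h1, h2, h3, h4, h5, h6⟩ :=
      exists_vectors_of_ternary_det_one b' a c' s' r' t' hb'_pos (by linarith) (by linarith)
    exact ⟨v₁, v₂, v₃, u₁, u₂, u₃, w₁, w₂, w₃, h2, h1, h3, h5, h4, by linarith⟩
  rcases lt_or_ge (a * c' - s' ^ 2) (a * b' - t' ^ 2) with hCB | hBC'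
  · obtain ⟨u₁, u₂, u₃, v₁, v₂, v₃, w₁, w₂, w₃, h1, h2, h3, h4, h5, h6⟩ :=
      exists_vectors_of_ternary_det_one a c' b' r' t' s' ha hC (by linarith)
    exact ⟨u₁, u₂, u₃, w₁, w₂, w₃, v₁, v₂, v₃, h1, h3, h2, by linarith, h6, h5⟩
  obtain ⟨B, hBdef⟩ : ∃ B, B = a * b' - t' ^ 2 := ⟨_, rfl⟩
  obtain ⟨C, hCdef⟩ : ∃ C, C = a * c' - s' ^ 2 := ⟨_, rfl⟩
  obtain ⟨R, hRdef⟩ : ∃ R, R = a * r' - s' * t' := ⟨_, rfl⟩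
  rw [← hBdef] at hBC hBC' hR hB'
  rw [← hCdef] at hBC hBC'
  rw [← hRdef] at hBC hR
  have ht2 : 4 * t' ^ 2 ≤ a ^ 2 := by
    have := sq_le_sq' (neg_le_of_abs_le hk) (le_of_abs_le hk); linarith
  have hR2 : 4 * R ^ 2 ≤ B ^ 2 := by
    have := sq_le_sq' (neg_le_of_abs_le hR) (le_of_abs_le hR); linarith
  have h3a : 3 * a ^ 2 ≤ 4 * B := by
    have := mul_le_mul_of_nonneg_left hab ha.le
    linarith
  have h3B : 3 * B ^ 2 ≤ 4 * a := by
    have := mul_le_mul_of_nonneg_left hBC' hB'.le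
    linarith
  have ha1 : a = 1 := by
    refine le_antisymm ?_ ha
    rcases le_total a B with h | h
    · have : 0 < B * (4 - 3 * B) + 1 := by linarith
      have : B ≤ 1 := by by_contra! hB2; nlinarith only [this, hB2]
      exact h.trans this
    · have : 0 < a * (4 - 3 * a) + 1 := by linarith
      by_contra! ha2
      nlinarith only [this, ha2]
  have hB1 : B = 1 := by
    refine le_antisymm ?_ hB'
    by_contra! hB2
    nlinarith only [h3B, ha1, hB2]
  have ht0 : t' = 0 := pow_eq_zero_iff two_ne_zero |>.mp <|
    le_antisymm (by rw [ha1] at ht2; omega) (sq_nonneg t')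
  have hR0 : R = 0 := pow_eq_zero_iff two_ne_zero |>.mp <|
    le_antisymm (by rw [hB1] at hR2; omega) (sq_nonneg R)
  have hC1 : C = 1 := by rw [hB1, hR0, ha1] at hBC; linarith
  rw [hB1, ha1, ht0] at hBdef
  rw [hC1, ha1] at hCdef
  rw [hR0, ha1, ht0] at hRdef
  refine ⟨1, 0, 0, 0, 1, 0, s', 0, 1, ?_, ?_, ?_, ?_, ?_, ?_⟩ <;> linarith
termination_by (a.toNat, (a * b - t ^ 2).toNat)
decreasing_by
  · exact Prod.Lex.left _ _ (by omega)
  · exact Prod.Lex.right _ (by omega)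

/-- If `-b` is a square modulo `b * n - 1`, then `n` is a primitive sum of three squares. -/
theorem exists_primitive_sum_three_squares_of_dvd (n b x : ℤ) (hb : 0 < b) (hm : 0 < b * n - 1)
    (h : b * n - 1 ∣ x ^ 2 + b) :
    ∃ u₁ u₂ u₃ : ℤ, u₁ ^ 2 + u₂ ^ 2 + u₃ ^ 2 = n ∧
      ∃ w₁ w₂ w₃ : ℤ, u₁ * w₁ + u₂ * w₂ + u₃ * w₃ = 1 := by
  obtain ⟨a, ha⟩ := h
  have ha_pos : 0 < a := by
    refine pos_of_mul_pos_right (a := b * n - 1) ?_ hm.le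
    rw [← ha]; positivity
  have hdet : a * (b * n - 1) - x ^ 2 = b := by linear_combination -ha
  obtain ⟨u₁, u₂, u₃, v₁, v₂, v₃, w₁, w₂, w₃, -, -, h3, -, h5, -⟩ :=
    exists_vectors_of_ternary_det_one a (b * n - 1) n 0 1 x ha_pos (by rwa [hdet])
      (by linear_combination n * hdet)
  exact ⟨w₁, w₂, w₃, by linarith, u₁, u₂, u₃, by linarith⟩

/-- Dirichlet's theorem: for `a` coprime to `k`, there is a prime of the form `k * v + a`. -/
theorem exists_prime_mul_add (k a : ℕ) (hk : k ≠ 0) (h : a.Coprime k) :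
    ∃ v : ℕ, (k * v + a).Prime := by
  obtain ⟨p, hpa, hp, hmod⟩ := Nat.forall_exists_prime_gt_and_modEq a hk h
  obtain ⟨v, hv⟩ := (Nat.modEq_iff_dvd' hpa.le).mp hmod.symm
  exact ⟨v, by rwa [← hv, Nat.sub_add_cancel hpa.le]⟩

open scoped NumberTheorySymbols

/-- If the Jacobi symbol of `-b` modulo a prime is `1`, then `-b` is a square modulo it. -/
theorem exists_dvd_sq_add_of_jacobiSym_eq_one {p : ℕ} (hp : p.Prime) {b : ℕ}
    (h : J(-b | p) = 1) : ∃ x : ℤ, (p : ℤ) ∣ x ^ 2 + b := by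
  have := Fact.mk hp
  obtain ⟨y, hy⟩ := ZMod.isSquare_of_jacobiSym_eq_one h
  obtain ⟨x, rfl⟩ := ZMod.intCast_surjective y
  refine ⟨x, (ZMod.intCast_zmod_eq_zero_iff_dvd _ p).mp ?_⟩
  push_cast at hy ⊢
  linear_combination -hy

/-- For `n ≡ 2` modulo `4`, there is `b` such that `-b` is a square modulo `b * n - 1`. -/
theorem exists_dvd_of_mod_four_eq_two (n : ℕ) (hn : n % 4 = 2) :
    ∃ b x : ℤ, 0 < b ∧ 0 < b * n - 1 ∧ b * n - 1 ∣ x ^ 2 + b := by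
  have hcop : (n - 1).Coprime (4 * n) := by
    refine Nat.Coprime.mul_right ?_ ?_
    · exact Nat.Coprime.pow_right 2 (Nat.coprime_two_right.mpr (Nat.odd_iff.mpr (by omega)))
    · obtain ⟨m, rfl⟩ : ∃ m, n = m + 1 := ⟨n - 1, by omega⟩
      simp
  obtain ⟨v, hp⟩ := exists_prime_mul_add (4 * n) (n - 1) (by omega) hcop
  obtain ⟨p, hpdef⟩ : ∃ p, p = 4 * n * v + (n - 1) := ⟨_, rfl⟩
  rw [← hpdef] at hp
  obtain ⟨b, hb⟩ : ∃ b, b = 4 * v + 1 := ⟨_, rfl⟩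
  have hpb : (p : ℤ) = b * n - 1 := by
    rw [hpdef, hb]; push_cast [Nat.cast_sub (show 1 ≤ n by omega)]; ring
  have hp4 : p % 4 = 1 := by
    rw [hpdef, mul_assoc, Nat.mul_add_mod]; omega
  have hJ : J(-b | p) = 1 := by
    rw [jacobiSym.neg _ (Nat.odd_iff.mpr (by omega)), ZMod.χ₄_nat_one_mod_four hp4, one_mul,
      jacobiSym.quadratic_reciprocity_one_mod_four (by omega) (Nat.odd_iff.mpr (by omega)), hpb,
      jacobiSym.mod_left' (a₂ := -1) (by rw [sub_eq_add_neg]; simp),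
      jacobiSym.at_neg_one (Nat.odd_iff.mpr (by omega)), ZMod.χ₄_nat_one_mod_four (by omega)]
  obtain ⟨x, hx⟩ := exists_dvd_sq_add_of_jacobiSym_eq_one hp hJ
  exact ⟨b, x, by omega, by rw [← hpb]; exact_mod_cast hp.pos, by rwa [← hpb]⟩

/-- For `n ≡ 1, 3, 5` modulo `8`, there is `b` such that `-b` is a square modulo `b * n - 1`. -/
theorem exists_dvd_of_mod_eight_odd (n : ℕ) (hn : n % 8 = 1 ∨ n % 8 = 3 ∨ n % 8 = 5) :
    ∃ b x : ℤ, 0 < b ∧ 0 < b * n - 1 ∧ b * n - 1 ∣ x ^ 2 + b := by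
  obtain ⟨c, q, hq, hcq⟩ : ∃ c q : ℕ, c * n = 2 * q + 1 ∧
      (c = 1 ∧ q % 4 = 1 ∨ c = 3 ∧ q % 4 = 1 ∨ c = 3 ∧ q % 4 = 3) := by
    rcases hn with h | h | h
    · exact ⟨3, (3 * n - 1) / 2, by omega, by omega⟩
    · exact ⟨1, (n - 1) / 2, by omega, by omega⟩
    · exact ⟨3, (3 * n - 1) / 2, by omega, by omega⟩
  have hcop : q.Coprime (4 * n) := by
    refine Nat.Coprime.mul_right ?_ ?_
    · exact Nat.Coprime.pow_right 2 (Nat.coprime_two_right.mpr (Nat.odd_iff.mpr (by omega)))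
    · refine Nat.Coprime.coprime_mul_left_right (k := c) ?_
      rw [hq]; simp
  obtain ⟨v, hp⟩ := exists_prime_mul_add (4 * n) q (by omega) hcop
  obtain ⟨p, hpdef⟩ : ∃ p, p = 4 * n * v + q := ⟨_, rfl⟩
  rw [← hpdef] at hp
  obtain ⟨b, hb⟩ : ∃ b, b = 8 * v + c := ⟨_, rfl⟩
  have hpb : (2 * p : ℤ) = b * n - 1 := by
    have : (c * n : ℤ) = 2 * q + 1 := by exact_mod_cast hq
    rw [hpdef, hb]; push_cast; linear_combination -this
  have hp4 : p % 4 = q % 4 := by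
    rw [hpdef, mul_assoc, Nat.mul_add_mod]
  have hpodd : Odd p := Nat.odd_iff.mpr (by omega)
  have hbodd : Odd b := Nat.odd_iff.mpr (by omega)
  have hpb' : J(p | b) = 1 := by
    have h4 : J(4 * p | b) = J(-2 | b) := by
      refine jacobiSym.mod_left' ?_
      rw [show (4 * p : ℤ) = -2 + b * (2 * n) by linear_combination 2 * hpb]
      simp
    rw [jacobiSym.mul_left, jacobiSym.at_four hbodd, one_mul, jacobiSym.at_neg_two hbodd,
      ZMod.χ₈'_nat_eq_if_mod_eight, if_neg (by omega), if_pos (by omega)] at h4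
    exact h4
  have hJ : J(-b | p) = 1 := by
    rw [jacobiSym.neg _ hpodd]
    rcases hcq with h | h | h
    · rw [ZMod.χ₄_nat_one_mod_four (by omega), one_mul,
        jacobiSym.quadratic_reciprocity_one_mod_four' hbodd (by omega), hpb']
    · rw [ZMod.χ₄_nat_one_mod_four (by omega), one_mul,
        jacobiSym.quadratic_reciprocity_one_mod_four' hbodd (by omega), hpb']
    · rw [ZMod.χ₄_nat_three_mod_four (by omega),
        jacobiSym.quadratic_reciprocity_three_mod_four (by omega) (by omega), hpb']
      norm_num
  obtain ⟨y, hy⟩ := exists_dvd_sq_add_of_jacobiSym_eq_one hp hJ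
  obtain ⟨x, hx, hx2⟩ : ∃ x : ℤ, (p : ℤ) ∣ x ^ 2 + b ∧ Odd x := by
    rcases Int.even_or_odd y with h | h
    · refine ⟨y + p, ?_, h.add_odd (by exact_mod_cast hpodd)⟩
      rw [show (y + p) ^ 2 + (b : ℤ) = y ^ 2 + b + p * (2 * y + p) by ring]
      exact dvd_add hy (dvd_mul_right _ _)
    · exact ⟨y, hy, h⟩
  refine ⟨b, x, by omega, by rw [← hpb]; have := hp.pos; omega, ?_⟩
  rw [← hpb]
  refine IsCoprime.mul_dvd ?_ ?_ hx
  · exact Int.isCoprime_iff_gcd_eq_one.mpr (Nat.coprime_two_left.mpr hpodd)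
  · exact (hx2.pow.add_odd (by exact_mod_cast hbodd)).two_dvd

/-- A positive integer that is not `0`, `4` or `7` modulo `8` is a primitive sum of three
squares. -/
theorem exists_primitive_sum_three_squares (n : ℕ) (h4 : n % 4 ≠ 0) (h8 : n % 8 ≠ 7) :
    ∃ u₁ u₂ u₃ : ℤ, u₁ ^ 2 + u₂ ^ 2 + u₃ ^ 2 = n ∧
      ∃ w₁ w₂ w₃ : ℤ, u₁ * w₁ + u₂ * w₂ + u₃ * w₃ = 1 := by
  obtain ⟨b, x, hb, hm, h⟩ :
      ∃ b x : ℤ, 0 < b ∧ 0 < b * n - 1 ∧ b * n - 1 ∣ x ^ 2 + b := by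
    by_cases h2 : n % 4 = 2
    · exact exists_dvd_of_mod_four_eq_two n h2
    · exact exists_dvd_of_mod_eight_odd n (by omega)
  exact exists_primitive_sum_three_squares_of_dvd n b x hb hm h

/-- `r₂₄(n)` is positive exactly when there is a vector of the kind it counts. -/
theorem r24_pos_iff_exists (n : ℕ) :
    0 < r24 n ↔ ∃ w : Fin 6 → ℤ, Finset.univ.gcd w = 1 ∧
      w 0 * w 5 - w 1 * w 4 + w 2 * w 3 = 0 ∧
      (w 0) ^ 2 + (w 1) ^ 2 + (w 2) ^ 2 + (w 3) ^ 2 + (w 4) ^ 2 + (w 5) ^ 2 = (n : ℤ) := by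
  have hfin : Finite {w : Fin 6 → ℤ // Finset.univ.gcd w = 1 ∧
      w 0 * w 5 - w 1 * w 4 + w 2 * w 3 = 0 ∧
      (w 0) ^ 2 + (w 1) ^ 2 + (w 2) ^ 2 + (w 3) ^ 2 + (w 4) ^ 2 + (w 5) ^ 2 = (n : ℤ)} := by
    refine Set.Finite.subset (Set.finite_Icc (fun _ => -(n : ℤ)) (fun _ => (n : ℤ))) ?_
    rintro w ⟨-, -, hw⟩
    have key (i : Fin 6) : (w i) ^ 2 ≤ n := by
      rw [← hw]
      fin_cases i <;> dsimp <;> linarith [sq_nonneg (w 0), sq_nonneg (w 1), sq_nonneg (w 2),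
        sq_nonneg (w 3), sq_nonneg (w 4), sq_nonneg (w 5)]
    have habs (i : Fin 6) : |w i| ≤ n := by
      rw [Int.abs_eq_natAbs]
      exact (Int.natAbs_le_self_sq _).trans (key i)
    exact ⟨fun i => (abs_le.mp (habs i)).1, fun i => (abs_le.mp (habs i)).2⟩
  rw [r24, div_pos_iff_of_pos_right two_pos, Nat.cast_pos, Nat.card_pos_iff]
  simp [hfin]

/-- A family of integers whose common divisors are all units has gcd `1`. -/
theorem Finset.gcd_univ_eq_one_of_forall_dvd {ι : Type*} [Fintype ι] (w : ι → ℤ)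
    (h : ∀ g : ℤ, (∀ i, g ∣ w i) → IsUnit g) : Finset.univ.gcd w = 1 := by
  rw [← Finset.normalize_gcd]
  exact normalize_eq_one.mpr (h _ fun i => Finset.gcd_dvd (Finset.mem_univ i))

/-- A primitive sum of three squares gives a primitive vector of the Plücker quadric. -/
theorem exists_of_primitive (n : ℕ) (u₁ u₂ u₃ w₁ w₂ w₃ : ℤ)
    (hn : u₁ ^ 2 + u₂ ^ 2 + u₃ ^ 2 = n) (hw : u₁ * w₁ + u₂ * w₂ + u₃ * w₃ = 1) :
    ∃ w : Fin 6 → ℤ, Finset.univ.gcd w = 1 ∧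
      w 0 * w 5 - w 1 * w 4 + w 2 * w 3 = 0 ∧
      (w 0) ^ 2 + (w 1) ^ 2 + (w 2) ^ 2 + (w 3) ^ 2 + (w 4) ^ 2 + (w 5) ^ 2 = (n : ℤ) := by
  refine ⟨![u₁, u₂, u₃, 0, 0, 0], Finset.gcd_univ_eq_one_of_forall_dvd _ fun g hg => ?_, ?_, ?_⟩
  · have h0 : g ∣ u₁ := hg 0
    have h1 : g ∣ u₂ := hg 1
    have h2 : g ∣ u₃ := hg 2
    refine isUnit_of_dvd_one (hw ▸ ?_)
    exact dvd_add (dvd_add (h0.mul_right _) (h1.mul_right _)) (h2.mul_right _)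
  · simp
  · simpa using hn

/-- A primitive representation `m = x² + y² + z²` with `x + y` odd gives a primitive vector of norm
`4 * m` on the Plücker quadric, built from `(x, y, z) ± (y, x, z)`. -/
theorem exists_four_mul_of_primitive (m : ℕ) (x y z w₁ w₂ w₃ : ℤ) (hxy : Odd (x + y))
    (hm : x ^ 2 + y ^ 2 + z ^ 2 = m) (hw : x * w₁ + y * w₂ + z * w₃ = 1) :
    ∃ w : Fin 6 → ℤ, Finset.univ.gcd w = 1 ∧
      w 0 * w 5 - w 1 * w 4 + w 2 * w 3 = 0 ∧
      (w 0) ^ 2 + (w 1) ^ 2 + (w 2) ^ 2 + (w 3) ^ 2 + (w 4) ^ 2 + (w 5) ^ 2 =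
        ((4 * m : ℕ) : ℤ) := by
  refine ⟨![x + y, x + y, 2 * z, 0, x - y, x - y],
    Finset.gcd_univ_eq_one_of_forall_dvd _ fun g hg => ?_, ?_, ?_⟩
  · have h0 : g ∣ x + y := hg 0
    have h2 : g ∣ 2 * z := hg 2
    have h4 : g ∣ x - y := hg 4
    have hg2 : g ∣ 2 := by
      rw [show (2 : ℤ) = (x + y) * (w₁ + w₂) + (x - y) * (w₁ - w₂) + 2 * z * w₃ by
        linear_combination -2 * hw]
      exact dvd_add (dvd_add (h0.mul_right _) (h4.mul_right _)) (h2.mul_right _)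
    obtain ⟨k, hk⟩ := hxy
    refine isUnit_of_dvd_one ?_
    rw [show (1 : ℤ) = x + y - 2 * k by linear_combination -hk]
    exact dvd_sub h0 (hg2.mul_right _)
  · simp
  · simp only [Matrix.cons_val]
    push_cast
    linear_combination 4 * hm

/-- The Plücker quadric has primitive vectors of every norm outside the excluded classes. -/
theorem exists_plucker_of_mod_sixteen (d : ℕ)
    (h : ¬(d % 16 = 0 ∨ d % 16 = 7 ∨ d % 16 = 12 ∨ d % 16 = 15)) :
    ∃ w : Fin 6 → ℤ, Finset.univ.gcd w = 1 ∧
      w 0 * w 5 - w 1 * w 4 + w 2 * w 3 = 0 ∧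
      (w 0) ^ 2 + (w 1) ^ 2 + (w 2) ^ 2 + (w 3) ^ 2 + (w 4) ^ 2 + (w 5) ^ 2 = (d : ℤ) := by
  by_cases h4 : d % 4 = 0
  · obtain ⟨m, rfl⟩ := Nat.dvd_of_mod_eq_zero h4
    obtain ⟨x, y, z, hm, w₁, w₂, w₃, hw⟩ :=
      exists_primitive_sum_three_squares m (by omega) (by omega)
    by_cases hxy : Odd (x + y)
    · exact exists_four_mul_of_primitive m x y z w₁ w₂ w₃ hxy hm hw
    by_cases hyz : Odd (y + z)
    · exact exists_four_mul_of_primitive m y z x w₂ w₃ w₁ hyz (by linarith) (by linarith)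
    exfalso
    rcases Int.even_or_odd' x with ⟨i, rfl | rfl⟩ <;>
    rcases Int.even_or_odd' y with ⟨j, rfl | rfl⟩ <;>
    rcases Int.even_or_odd' z with ⟨k, rfl | rfl⟩ <;>
    simp only [Int.not_odd_iff] at hxy hyz <;> ring_nf at hm hxy hyz <;> omega
  · obtain ⟨u₁, u₂, u₃, hn, w₁, w₂, w₃, hw⟩ :=
      exists_primitive_sum_three_squares d h4 (by omega)
    exact exists_of_primitive d u₁ u₂ u₃ w₁ w₂ w₃ hn hw

/-- The residue modulo `8` of the square of an integer. -/
theorem Int.sq_emod_eight (x : ℤ) :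
    x % 2 = 1 ∧ x ^ 2 % 8 = 1 ∨ x % 4 = 0 ∧ x ^ 2 % 8 = 0 ∨ x % 4 = 2 ∧ x ^ 2 % 8 = 4 := by
  have : x % 8 = 0 ∨ x % 8 = 1 ∨ x % 8 = 2 ∨ x % 8 = 3 ∨ x % 8 = 4 ∨ x % 8 = 5 ∨
    x % 8 = 6 ∨ x % 8 = 7 := by omega
  rcases this with h | h | h | h | h | h | h | h <;> simp [pow_two, Int.mul_emod, h] <;> omega

/-- Congruence constraints on a sum of three squares. -/
theorem three_squares_parity (x y z : ℤ) :
    ((x ^ 2 + y ^ 2 + z ^ 2) % 4 = 0 → x % 2 = 0 ∧ y % 2 = 0 ∧ z % 2 = 0) ∧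
    ((x ^ 2 + y ^ 2 + z ^ 2) % 4 = 3 → x % 2 = 1 ∧ y % 2 = 1 ∧ z % 2 = 1) ∧
    (x ^ 2 + y ^ 2 + z ^ 2) % 8 ≠ 7 := by
  have hx := Int.sq_emod_eight x
  have hy := Int.sq_emod_eight y
  have hz := Int.sq_emod_eight z
  omega

/-- The norm of a primitive vector of the Plücker quadric avoids the excluded classes. -/
theorem mod_sixteen_of_plucker {d : ℕ} {w : Fin 6 → ℤ} (hg : Finset.univ.gcd w = 1)
    (hp : w 0 * w 5 - w 1 * w 4 + w 2 * w 3 = 0)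
    (hn : (w 0) ^ 2 + (w 1) ^ 2 + (w 2) ^ 2 + (w 3) ^ 2 + (w 4) ^ 2 + (w 5) ^ 2 = (d : ℤ)) :
    ¬(d % 16 = 0 ∨ d % 16 = 7 ∨ d % 16 = 12 ∨ d % 16 = 15) := by
  intro hd
  have hsum : (w 0 + w 5) ^ 2 + (w 1 - w 4) ^ 2 + (w 2 + w 3) ^ 2 = d := by
    linear_combination hn + 2 * hp
  have hdiff : (w 0 - w 5) ^ 2 + (w 1 + w 4) ^ 2 + (w 2 - w 3) ^ 2 = d := by
    linear_combination hn - 2 * hp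
  obtain ⟨even, -, ne⟩ := three_squares_parity (w 0 + w 5) (w 1 - w 4) (w 2 + w 3)
  rw [hsum] at even ne
  obtain ⟨h05, h14, h23⟩ := even (by omega)
  obtain ⟨A, hA⟩ : ∃ A, w 0 + w 5 = 2 * A := ⟨(w 0 + w 5) / 2, by omega⟩
  obtain ⟨B, hB⟩ : ∃ B, w 1 - w 4 = 2 * B := ⟨(w 1 - w 4) / 2, by omega⟩
  obtain ⟨C, hC⟩ : ∃ C, w 2 + w 3 = 2 * C := ⟨(w 2 + w 3) / 2, by omega⟩
  obtain ⟨A', hA'⟩ : ∃ A', w 0 - w 5 = 2 * A' := ⟨(w 0 - w 5) / 2, by omega⟩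
  obtain ⟨B', hB'⟩ : ∃ B', w 1 + w 4 = 2 * B' := ⟨(w 1 + w 4) / 2, by omega⟩
  obtain ⟨C', hC'⟩ : ∃ C', w 2 - w 3 = 2 * C' := ⟨(w 2 - w 3) / 2, by omega⟩
  rw [hA, hB, hC, mul_pow, mul_pow, mul_pow] at hsum
  rw [hA', hB', hC', mul_pow, mul_pow, mul_pow] at hdiff
  have hpar : A % 2 = B % 2 ∧ A % 2 = C % 2 ∧ A % 2 = A' % 2 ∧ A % 2 = B' % 2 ∧
      A % 2 = C' % 2 := by
    obtain ⟨even₁, odd₁, -⟩ := three_squares_parity A B C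
    obtain ⟨even₂, odd₂, -⟩ := three_squares_parity A' B' C'
    obtain h | h : d % 16 = 0 ∨ d % 16 = 12 := by omega
    · have h₁ := even₁ (by omega)
      have h₂ := even₂ (by omega)
      omega
    · have h₁ := odd₁ (by omega)
      have h₂ := odd₂ (by omega)
      omega
  clear hn hp hsum hdiff
  have h2 : (2 : ℤ) ∣ Finset.univ.gcd w := by
    refine Finset.dvd_gcd fun i _ => ?_
    fin_cases i <;> dsimp <;> omega
  rw [hg] at h2
  omega

/-- for every positive integer `d`, `r₂₄(d) > 0` if and only if
`d mod 16 ∉ {0, 7, 12, 15}`. -/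
theorem r24_pos_iff (d : ℕ) (hd : 0 < d) :
    0 < r24 d ↔ ¬(d % 16 = 0 ∨ d % 16 = 7 ∨ d % 16 = 12 ∨ d % 16 = 15) := by
  rw [r24_pos_iff_exists]
  exact ⟨fun ⟨_, hg, hp, hn⟩ => mod_sixteen_of_plucker hg hp hn, exists_plucker_of_mod_sixteen d⟩
end

section
/- Let d be a positive integer with d mod 16 ∉ {0,7,12,15}, and write d = d₀·4ᵉ·f² with d₀ squarefree, f odd and e ∈ {0,1}. Then, as an identity of rational numbers, r₂₄(d) = c_d · r₃(d₀)² · f² · Σ_{c ∣ f} (2^{ω(c)}/c) · ∏_{p prime, p ∣ f} (1 − p⁻¹·(−d₀/p))^{e_p(f/c)}, where c_d = 1/2 if d ≡ 3 (mod 4), c_d = 1/6 if d ≡ 1 or 2 (mod 4), c_d = 1/3 if d ≡ 0 (mod 4); (−d₀/p) is the Legendre symbol; ω(c) is the number of distinct prime divisors of c; and e_p(n) = 2 if p ∣ n and e_p(n) = 1 otherwise. -/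
/-- `r₃(n)`: the number of triples `(x,y,z) ∈ ℤ³` with `x²+y²+z² = n`. -/
noncomputable def r3 (n : ℕ) : ℕ :=
  Nat.card {v : Fin 3 → ℤ // (v 0) ^ 2 + (v 1) ^ 2 + (v 2) ^ 2 = (n : ℤ)}

section IntegralQuaternions

open Quaternion

/-- The quaternion with the given coordinates. -/
def quatMk {R : Type*} [CommRing R] (a b c d : R) : ℍ[R] := ⟨a, b, c, d⟩

section

variable {R : Type*} [CommRing R] (a b c d : R)

@[simp] theorem quatMk_re : (quatMk a b c d).re = a := rfl
@[simp] theorem quatMk_imI : (quatMk a b c d).imI = b := rfl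
@[simp] theorem quatMk_imJ : (quatMk a b c d).imJ = c := rfl
@[simp] theorem quatMk_imK : (quatMk a b c d).imK = d := rfl

end

/-- Coordinatewise reduction of an integral quaternion modulo `n`. -/
def quatRed (n : ℕ) (q : ℍ[ℤ]) : ℍ[ZMod n] :=
  quatMk (q.re : ZMod n) q.imI q.imJ q.imK

theorem quatRed_mul (n : ℕ) (a b : ℍ[ℤ]) : quatRed n (a * b) = quatRed n a * quatRed n b := by
  ext <;> simp [quatRed]

theorem quatRed_star (n : ℕ) (a : ℍ[ℤ]) : quatRed n (star a) = star (quatRed n a) := by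
  ext <;> simp [quatRed]

theorem quatRed_smul (n : ℕ) (k : ℤ) (a : ℍ[ℤ]) :
    quatRed n (k • a) = (k : ZMod n) • quatRed n a := by
  ext <;> simp [quatRed]

theorem normSq_quatRed (n : ℕ) (a : ℍ[ℤ]) :
    normSq (quatRed n a) = ((normSq a : ℤ) : ZMod n) := by
  simp [normSq_def', quatRed]

theorem quatRed_eq_zero_iff (n : ℕ) (q : ℍ[ℤ]) :
    quatRed n q = 0 ↔ ∃ q' : ℍ[ℤ], q = (n : ℤ) • q' := by
  constructor
  · intro h
    have h1 := congrArg QuaternionAlgebra.re h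
    have h2 := congrArg QuaternionAlgebra.imI h
    have h3 := congrArg QuaternionAlgebra.imJ h
    have h4 := congrArg QuaternionAlgebra.imK h
    simp only [quatRed, quatMk_re, quatMk_imI, quatMk_imJ, quatMk_imK, re_zero, imI_zero,
      imJ_zero, imK_zero, ZMod.intCast_zmod_eq_zero_iff_dvd] at h1 h2 h3 h4
    obtain ⟨a, ha⟩ := h1
    obtain ⟨b, hb⟩ := h2
    obtain ⟨c, hc⟩ := h3
    obtain ⟨d, hd⟩ := h4
    exact ⟨quatMk a b c d, by ext <;> simp [*]⟩
  · rintro ⟨q', rfl⟩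
    rw [quatRed_smul]
    simp

theorem exists_balanced_residue (m : ℕ) (hm : 0 < m) (x : ℤ) :
    ∃ k r : ℤ, x = m * k + r ∧ 4 * r ^ 2 ≤ (m : ℤ) ^ 2 := by
  have : NeZero m := ⟨hm.ne'⟩
  have h1 : ((x - (x : ZMod m).valMinAbs : ℤ) : ZMod m) = 0 := by simp
  rw [ZMod.intCast_zmod_eq_zero_iff_dvd] at h1
  obtain ⟨k, hk⟩ := h1
  have h2 := ZMod.valMinAbs_mem_Ioc (x : ZMod m)
  simp only [Set.mem_Ioc] at h2
  exact ⟨k, (x : ZMod m).valMinAbs, by linarith, by nlinarith⟩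

theorem exists_balanced_quaternion (m : ℕ) (hm : 0 < m) (q : ℍ[ℤ]) :
    ∃ k r : ℍ[ℤ], q = (m : ℤ) • k + r ∧ 4 * r.re ^ 2 ≤ (m : ℤ) ^ 2 ∧
      4 * r.imI ^ 2 ≤ (m : ℤ) ^ 2 ∧ 4 * r.imJ ^ 2 ≤ (m : ℤ) ^ 2 ∧
      4 * r.imK ^ 2 ≤ (m : ℤ) ^ 2 := by
  obtain ⟨k1, r1, h1, h1'⟩ := exists_balanced_residue m hm q.re
  obtain ⟨k2, r2, h2, h2'⟩ := exists_balanced_residue m hm q.imI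
  obtain ⟨k3, r3, h3, h3'⟩ := exists_balanced_residue m hm q.imJ
  obtain ⟨k4, r4, h4, h4'⟩ := exists_balanced_residue m hm q.imK
  exact ⟨quatMk k1 k2 k3 k4, quatMk r1 r2 r3 r4, by ext <;> simp [*], h1', h2', h3', h4'⟩

/-- A multiple of a nonzero residue is divisible by a square when the residue is extremal. -/
theorem sq_dvd_normSq_of_extremal (m : ℕ) (k r : ℍ[ℤ])
    (h1 : 4 * r.re ^ 2 = (m : ℤ) ^ 2) (h2 : 4 * r.imI ^ 2 = (m : ℤ) ^ 2)
    (h3 : 4 * r.imJ ^ 2 = (m : ℤ) ^ 2) (h4 : 4 * r.imK ^ 2 = (m : ℤ) ^ 2) :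
    (m : ℤ) ^ 2 ∣ normSq ((m : ℤ) • k + r) := by
  obtain ⟨s, hs⟩ : (2 : ℤ) ∣ m := by
    have : (2 : ℤ) ∣ (m : ℤ) ^ 2 := ⟨2 * r.re ^ 2, by linarith⟩
    exact Int.prime_two.dvd_of_dvd_pow this
  have key : ∀ x : ℤ, 4 * x ^ 2 = (m : ℤ) ^ 2 → ∃ t : ℤ, x = s * t ∧ t ^ 2 = 1 := by
    intro x hx
    have : (x - s) * (x + s) = 0 := by rw [hs] at hx; linarith
    rcases mul_eq_zero.1 this with h | h
    · exact ⟨1, by linarith, by norm_num⟩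
    · exact ⟨-1, by linarith, by norm_num⟩
  obtain ⟨t1, e1, f1⟩ := key _ h1
  obtain ⟨t2, e2, f2⟩ := key _ h2
  obtain ⟨t3, e3, f3⟩ := key _ h3
  obtain ⟨t4, e4, f4⟩ := key _ h4
  refine ⟨normSq k + (k.re * t1 + k.imI * t2 + k.imJ * t3 + k.imK * t4) + 1, ?_⟩
  simp only [normSq_def', re_add, imI_add, imJ_add, imK_add, re_smul, imI_smul, imJ_smul,
    imK_smul, smul_eq_mul, e1, e2, e3, e4, hs]
  linear_combination s ^ 2 * (f1 + f2 + f3 + f4)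

theorem exists_normSq_eq_prime_of_descent (p : ℕ) [hp : Fact p.Prime] (l : ℍ[ZMod p]) (m : ℕ) :
    ∀ α : ℍ[ℤ], l * quatRed p α = 0 → normSq α = (p : ℤ) * m → 0 < m → m < p →
      ∃ β : ℍ[ℤ], normSq β = (p : ℤ) ∧ l * quatRed p β = 0 := by
  induction m using Nat.strong_induction_on with
  | _ m ih =>
  intro α hl hα hm hmp
  rcases eq_or_ne m 1 with rfl | hm1
  · exact ⟨α, by simpa using hα, hl⟩
  have hm0 : (m : ℤ) ≠ 0 := by exact_mod_cast hm.ne'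
  have hnd : ¬ (m : ℤ) ^ 2 ∣ normSq α := by
    rw [hα, pow_two]
    intro h
    have h1 : (m : ℤ) ∣ p := Int.dvd_of_mul_dvd_mul_right hm0 h
    rcases (Nat.dvd_prime hp.out).1 (Int.natCast_dvd_natCast.1 h1) with h | h <;> omega
  obtain ⟨k, r, hkr, b1, b2, b3, b4⟩ := exists_balanced_quaternion m hm α
  obtain ⟨t, ht⟩ : (m : ℤ) ∣ normSq r := by
    have : normSq r = normSq α - (m : ℤ) * (m * normSq k + 2 * (k.re * r.re + k.imI * r.imI +
        k.imJ * r.imJ + k.imK * r.imK)) := by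
      rw [hkr]
      simp only [normSq_def', re_add, imI_add, imJ_add, imK_add, re_smul, imI_smul, imJ_smul,
        imK_smul, smul_eq_mul]
      ring
    rw [this, hα]
    exact ⟨p - (m * normSq k + 2 * (k.re * r.re + k.imI * r.imI +
        k.imJ * r.imJ + k.imK * r.imK)), by ring⟩
  have hN : normSq r = r.re ^ 2 + r.imI ^ 2 + r.imJ ^ 2 + r.imK ^ 2 := normSq_def' r
  have hmpos : (0 : ℤ) < m := by exact_mod_cast hm
  have ht0 : 0 ≤ t := by
    have : 0 ≤ (m : ℤ) * t := by rw [← ht]; exact normSq_nonneg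
    exact nonneg_of_mul_nonneg_right this hmpos
  have ht1 : t ≠ 0 := by
    rintro rfl
    have : r = 0 := by rw [← normSq_eq_zero, ht, mul_zero]
    apply hnd
    rw [hkr, this, add_zero, normSq_smul]
    exact Dvd.intro _ rfl
  have ht2 : t < m := by
    by_contra hlt
    push Not at hlt
    have h5 : (m : ℤ) ^ 2 ≤ normSq r := by rw [ht]; nlinarith
    apply hnd
    rw [hkr]
    apply sq_dvd_normSq_of_extremal m <;> linarith
  obtain ⟨t, rfl⟩ := Int.eq_ofNat_of_zero_le ht0
  have hrs : r * star r = ((m * t : ℤ) : ℍ[ℤ]) := by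
    rw [self_mul_star, ht]
    norm_cast
  have hδ : α * star r = (m : ℤ) • (k * star r + ((t : ℤ) : ℍ[ℤ])) := by
    rw [hkr, add_mul, hrs]
    simp [zsmul_eq_mul, mul_assoc]
  refine ih t (by exact_mod_cast ht2) (k * star r + ((t : ℤ) : ℍ[ℤ])) ?_ ?_
    (by omega) (by omega)
  · have h6 : l * quatRed p ((m : ℤ) • (k * star r + ((t : ℤ) : ℍ[ℤ]))) = 0 := by
      rw [← hδ, quatRed_mul, ← mul_assoc, hl, zero_mul]
    rw [quatRed_smul, mul_smul_comm] at h6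
    refine (smul_eq_zero_iff_right ?_).1 h6
    intro h
    have := Nat.le_of_dvd hm ((ZMod.natCast_eq_zero_iff m p).1 (by simpa using h))
    omega
  · have h7 := congrArg normSq hδ
    rw [map_mul, normSq_star, normSq_smul, hα, ht] at h7
    apply mul_left_cancel₀ (pow_ne_zero 2 hm0)
    rw [← h7]
    ring

theorem exists_normSq_eq_prime_of_isotropic (p : ℕ) [hp : Fact p.Prime] (hp2 : p ≠ 2)
    (l : ℍ[ZMod p]) (hre : l.re = 0) (hn : normSq l = 0) (h0 : l ≠ 0) :
    ∃ β : ℍ[ℤ], normSq β = (p : ℤ) ∧ l * quatRed p β = 0 := by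
  let α : ℍ[ℤ] := quatMk l.re.valMinAbs l.imI.valMinAbs l.imJ.valMinAbs l.imK.valMinAbs
  have hα : quatRed p α = l := by ext <;> simp [quatRed, α]
  have hodd : ¬ 2 ∣ p := fun h => hp2 ((Nat.prime_dvd_prime_iff_eq Nat.prime_two hp.out).1 h).symm
  have bound : ∀ x : ZMod p, 4 * x.valMinAbs ^ 2 < (p : ℤ) ^ 2 := by
    intro x
    have h := ZMod.valMinAbs_mem_Ioc x
    simp only [Set.mem_Ioc] at h
    have h' : x.valMinAbs * 2 ≠ p := by intro h; omega
    have h2 : x.valMinAbs * 2 < p := lt_of_le_of_ne h.2 h'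
    nlinarith
  have hlt : normSq α < (p : ℤ) ^ 2 := by
    have e1 := bound l.re
    have e2 := bound l.imI
    have e3 := bound l.imJ
    have e4 := bound l.imK
    rw [normSq_def']
    simp only [α, quatMk_re, quatMk_imI, quatMk_imJ, quatMk_imK]
    linarith
  have hpos : 0 < normSq α := by
    refine lt_of_le_of_ne normSq_nonneg fun h => h0 ?_
    rw [eq_comm, normSq_eq_zero] at h
    rw [← hα, h]
    ext <;> simp [quatRed]
  obtain ⟨m, hm⟩ : (p : ℤ) ∣ normSq α := by
    rw [← ZMod.intCast_zmod_eq_zero_iff_dvd, ← normSq_quatRed, hα, hn]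
  have hp0 : (0 : ℤ) < p := by exact_mod_cast hp.out.pos
  have hm0 : 0 < m := by
    rw [hm] at hpos
    exact pos_of_mul_pos_right hpos hp0.le
  have hmp : m < p := by
    rw [hm, pow_two] at hlt
    exact lt_of_mul_lt_mul_left hlt hp0.le
  obtain ⟨m, rfl⟩ := Int.eq_ofNat_of_zero_le hm0.le
  refine exists_normSq_eq_prime_of_descent p l m α ?_ hm (by omega) (by omega)
  rw [hα]
  have h1 : star l = -l := by ext <;> simp [hre]
  have h2 := self_mul_star l
  rw [h1, hn, mul_neg] at h2
  simpa using h2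

end IntegralQuaternions

section IsotropicQuaternions

open Quaternion

variable {K : Type*} [Field K]

theorem exists_re_mul_ne_zero {q : ℍ[K]} (hq : q ≠ 0) : ∃ s : ℍ[K], (q * s).re ≠ 0 := by
  by_contra! h
  apply hq
  have h1 := h 1
  have h2 := h (quatMk 0 1 0 0)
  have h3 := h (quatMk 0 0 1 0)
  have h4 := h (quatMk 0 0 0 1)
  simp only [re_mul, quatMk_re, quatMk_imI, quatMk_imJ, quatMk_imK, re_one, imI_one, imJ_one,
    imK_one] at h1 h2 h3 h4
  ext
  · rw [re_zero]; linear_combination h1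
  · rw [imI_zero]; linear_combination -h2
  · rw [imJ_zero]; linear_combination -h3
  · rw [imK_zero]; linear_combination -h4

theorem star_eq_neg_of_re {R : Type*} [CommRing R] {l : ℍ[R]} (h : l.re = 0) : star l = -l := by
  ext <;> simp [h]

theorem mul_self_of_re {R : Type*} [CommRing R] {l : ℍ[R]} (h : l.re = 0) :
    l * l = -((normSq l : R) : ℍ[R]) := by
  rw [← self_mul_star, star_eq_neg_of_re h, mul_neg, neg_neg]

theorem mul_add_mul_of_re {R : Type*} [CommRing R] {l x : ℍ[R]} (hl : l.re = 0) (hx : x.re = 0) :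
    l * x + x * l = ((2 * (l * x).re : R) : ℍ[R]) := by
  rw [← self_add_star', star_mul, star_eq_neg_of_re hl, star_eq_neg_of_re hx, neg_mul_neg]

theorem exists_eq_mul_of_isotropic (h2 : (2 : K) ≠ 0) {l a : ℍ[K]} (hre : l.re = 0) (h0 : l ≠ 0)
    (hla : l * a = 0) : ∃ b, a = l * b := by
  obtain ⟨s, hs⟩ := exists_re_mul_ne_zero h0
  have h := self_add_star' (l * s)
  rw [star_mul, star_eq_neg_of_re hre] at h
  have h' : l * s * a = (2 * (l * s).re) • a := by
    rw [← coe_mul_eq_smul, ← h, add_mul, mul_assoc (star s), neg_mul, hla]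
    simp
  refine ⟨(2 * (l * s).re)⁻¹ • (s * a), ?_⟩
  rw [mul_smul_comm, ← mul_assoc, h', smul_smul, inv_mul_cancel₀ (mul_ne_zero h2 hs), one_smul]

theorem star_mul_eq_zero_of_mul_eq_zero (h2 : (2 : K) ≠ 0) {l a g : ℍ[K]} (hre : l.re = 0)
    (h0 : l ≠ 0) (hla : l * a = 0) (hg : l * g = 0) : star a * g = 0 := by
  obtain ⟨b, rfl⟩ := exists_eq_mul_of_isotropic h2 hre h0 hla
  rw [star_mul, star_eq_neg_of_re hre, mul_assoc, neg_mul, hg]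
  simp

theorem mul_eq_zero_of_star_mul_eq_zero (h2 : (2 : K) ≠ 0) {l a g : ℍ[K]}
    (ha : a ≠ 0) (hla : l * a = 0) (hg : star a * g = 0) : l * g = 0 := by
  have ha' : star a ≠ 0 := by simpa using ha
  obtain ⟨s, hs⟩ := exists_re_mul_ne_zero ha'
  have h := star_add_self' (star a * s)
  rw [star_mul, star_star] at h
  have h3 := self_add_star' (s * star a)
  rw [star_mul, star_star] at h3
  have h4 : (s * star a).re = (star a * s).re := by simp only [re_mul]; ring
  have h' : (2 * (star a * s).re) • (l * g) = l * s * (star a * g) := by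
    rw [← mul_smul_comm, ← coe_mul_eq_smul, ← h4, ← h3, add_mul, mul_add, mul_assoc a,
      ← mul_assoc l a, hla]
    simp [mul_assoc]
  rw [hg, mul_zero] at h'
  exact (smul_eq_zero_iff_right (mul_ne_zero h2 hs)).1 h'

theorem conj_eq_zero_iff (h2 : (2 : K) ≠ 0) {l a x : ℍ[K]} (hre : l.re = 0) (h0 : l ≠ 0)
    (hl : normSq l = 0) (ha : a ≠ 0) (hla : l * a = 0) (hx : x.re = 0) :
    star a * x * a = 0 ↔ (l * x).re = 0 := by
  have hc := mul_add_mul_of_re hre hx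
  constructor
  · intro h
    have h1 := mul_eq_zero_of_star_mul_eq_zero h2 ha hla (g := x * a) (by rw [← mul_assoc, h])
    have h3 := congrArg (· * a) hc
    simp only [add_mul, mul_assoc, h1, hla, mul_zero, add_zero] at h3
    rw [coe_mul_eq_smul] at h3
    by_contra hne
    exact ha ((smul_eq_zero_iff_right (mul_ne_zero h2 hne)).1 h3.symm)
  · intro h
    obtain ⟨b, rfl⟩ := exists_eq_mul_of_isotropic h2 hre h0 hla
    have h1 : l * x = -(x * l) := by
      rw [h] at hc
      exact eq_neg_of_add_eq_zero_left (by simpa using hc)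
    have h3 : l * x * l = 0 := by
      rw [h1, neg_mul, mul_assoc, mul_self_of_re hre, hl]
      simp
    rw [star_mul, star_eq_neg_of_re hre]
    calc star b * -l * x * (l * b) = -(star b * (l * x * l) * b) := by noncomm_ring
      _ = 0 := by rw [h3]; simp

end IsotropicQuaternions

section ConjugationDivisibility

open Quaternion

variable {p : ℕ}

theorem mul_conj_mul {α x : ℍ[ℤ]} (hα : normSq α = (p : ℤ)) :
    α * (star α * x * α) * star α = ((p : ℤ) ^ 2) • x := by
  have h := self_mul_star α
  rw [hα] at h
  calc α * (star α * x * α) * star α = (α * star α) * x * (α * star α) := by noncomm_ring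
    _ = _ := by rw [h, coe_mul_eq_smul, mul_coe_eq_smul, smul_smul, pow_two]

theorem conj_mul_conj {α y : ℍ[ℤ]} (hα : normSq α = (p : ℤ)) :
    star α * (α * y * star α) * α = ((p : ℤ) ^ 2) • y := by
  have h := star_mul_self α
  rw [hα] at h
  calc star α * (α * y * star α) * α = (star α * α) * y * (star α * α) := by noncomm_ring
    _ = _ := by rw [h, coe_mul_eq_smul, mul_coe_eq_smul, smul_smul, pow_two]

theorem smul_left_cancel_int {k : ℤ} (hk : k ≠ 0) {a b : ℍ[ℤ]} (h : k • a = k • b) : a = b :=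
  smul_right_injective _ hk h

variable [hp : Fact p.Prime]

theorem ZMod.two_ne_zero_of_prime_ne_two (hp2 : p ≠ 2) : (2 : ZMod p) ≠ 0 := by
  exact Ring.two_ne_zero (by rwa [ZMod.ringChar_zmod_n])

theorem quatRed_ne_zero_of_normSq {α : ℍ[ℤ]} (hα : normSq α = (p : ℤ)) : quatRed p α ≠ 0 := by
  intro h
  obtain ⟨q, rfl⟩ := (quatRed_eq_zero_iff p α).1 h
  rw [normSq_smul, pow_two, mul_assoc] at hα
  have hp0 : (p : ℤ) ≠ 0 := by exact_mod_cast hp.out.ne_zero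
  have h1 : (p : ℤ) * normSq q = 1 := by
    apply mul_left_cancel₀ hp0
    rw [hα, mul_one]
  have h2 := Int.isUnit_iff.1 (IsUnit.of_mul_eq_one _ h1)
  have := hp.out.two_le
  omega

theorem eq_mul_of_conj_eq {α x y : ℍ[ℤ]} (hα : normSq α = (p : ℤ))
    (h : star α * x * α = ((p : ℤ) ^ 2) • y) : x = α * y * star α := by
  have hp0 : (p : ℤ) ^ 2 ≠ 0 := by exact_mod_cast pow_ne_zero 2 hp.out.ne_zero
  apply smul_left_cancel_int hp0
  rw [← mul_conj_mul hα, h, mul_smul_comm, smul_mul_assoc]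

theorem conj_smul_dvd_iff (hp2 : p ≠ 2) {l : ℍ[ZMod p]} {α x : ℍ[ℤ]} (hre : l.re = 0)
    (h0 : l ≠ 0) (hl : normSq l = 0) (hα : normSq α = (p : ℤ)) (hla : l * quatRed p α = 0)
    (hx : x.re = 0) :
    (∃ y, star α * ((p : ℤ) • x) * α = ((p : ℤ) ^ 2) • y) ↔ (l * quatRed p x).re = 0 := by
  have hp0 : (p : ℤ) ≠ 0 := by exact_mod_cast hp.out.ne_zero
  rw [← conj_eq_zero_iff (ZMod.two_ne_zero_of_prime_ne_two hp2) hre h0 hl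
    (quatRed_ne_zero_of_normSq hα) hla (by simp [quatRed, hx]), ← quatRed_star, ← quatRed_mul,
    ← quatRed_mul, quatRed_eq_zero_iff]
  refine exists_congr fun y => ?_
  rw [mul_smul_comm, smul_mul_assoc, pow_two, mul_smul]
  exact ⟨fun h => smul_left_cancel_int hp0 h, fun h => by rw [h]⟩

theorem conj_dvd_iff_of_primitive (hp2 : p ≠ 2) {l : ℍ[ZMod p]} {α x : ℍ[ℤ]} (hre : l.re = 0)
    (h0 : l ≠ 0) (hα : normSq α = (p : ℤ)) (hla : l * quatRed p α = 0)
    (hx : x.re = 0) (hx0 : quatRed p x ≠ 0) {n : ℤ} (hn : normSq x = (p : ℤ) ^ 2 * n) :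
    (∃ y, star α * x * α = ((p : ℤ) ^ 2) • y) ↔ l * quatRed p x = 0 := by
  have hp0 : (p : ℤ) ≠ 0 := by exact_mod_cast hp.out.ne_zero
  have h2 := ZMod.two_ne_zero_of_prime_ne_two hp2
  have hxre : (quatRed p x).re = 0 := by simp [quatRed, hx]
  constructor
  · rintro ⟨y, hy⟩
    rw [eq_mul_of_conj_eq hα hy, mul_assoc, quatRed_mul, ← mul_assoc, hla, zero_mul]
  · intro h
    have hxl : quatRed p x * l = 0 := by
      have := congrArg star h
      rwa [star_mul, star_eq_neg_of_re hre, star_eq_neg_of_re hxre, neg_mul_neg, star_zero] at this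
    have hxa : quatRed p x * quatRed p α = 0 := by
      obtain ⟨b, hb⟩ := exists_eq_mul_of_isotropic h2 hre h0 hla
      rw [hb, ← mul_assoc, hxl, zero_mul]
    obtain ⟨γ, hγ⟩ := (quatRed_eq_zero_iff p (x * α)).1 (by rw [quatRed_mul, hxa])
    have hxγ : x * γ = (p : ℤ) • (-n • α) := by
      apply smul_left_cancel_int hp0
      rw [← mul_smul_comm, ← hγ, ← mul_assoc, mul_self_of_re hx, hn, ← coe_neg, coe_mul_eq_smul,
        smul_smul, smul_smul]
      congr 1
      ring
    have h3 : quatRed p x * quatRed p γ = 0 := by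
      rw [← quatRed_mul, hxγ, quatRed_smul]
      simp
    have h4 := star_mul_eq_zero_of_mul_eq_zero h2 hxre hx0 hxa h3
    rw [← quatRed_star, ← quatRed_mul, quatRed_eq_zero_iff] at h4
    obtain ⟨y, hy⟩ := h4
    exact ⟨y, by rw [mul_assoc, hγ, mul_smul_comm, hy, smul_smul, pow_two]⟩

end ConjugationDivisibility

section FiniteFieldCounts

open Finset

variable {K : Type*} [Field K] [Fintype K] [DecidableEq K]

theorem card_filter_sq_eq (hK : ringChar K ≠ 2) (a : K) :
    ((univ.filter fun x : K => x ^ 2 = a).card : ℤ) = quadraticChar K a + 1 := by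
  rw [← quadraticChar_card_sqrts hK a]
  congr 2
  ext
  simp

theorem card_filter_prod_eq_sum {α β : Type*} [Fintype α] [Fintype β] (P : α → β → Prop)
    [∀ a b, Decidable (P a b)] :
    (univ.filter fun v : α × β => P v.1 v.2).card = ∑ b, (univ.filter fun a => P a b).card := by
  simp only [card_filter, ← univ_product_univ]
  rw [sum_product_right]

theorem quadraticChar_mul_sq {D v : K} (hv : v ≠ 0) :
    quadraticChar K (D * v ^ 2) = quadraticChar K D := by
  rw [map_mul, quadraticChar_sq_one' hv, mul_one]

theorem card_binary_form_zeros_of_ne (hK : ringChar K ≠ 2) {A B C : K} (hA : A ≠ 0) :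
    ((univ.filter fun v : K × K => A * v.1 ^ 2 + 2 * B * v.1 * v.2 + C * v.2 ^ 2 = 0).card : ℤ) =
      1 + (Fintype.card K - 1) * (1 + quadraticChar K (B ^ 2 - A * C)) := by
  rw [card_filter_prod_eq_sum fun u v : K => A * u ^ 2 + 2 * B * u * v + C * v ^ 2 = 0]
  have h : ∀ v : K,
      ((univ.filter fun u : K => A * u ^ 2 + 2 * B * u * v + C * v ^ 2 = 0).card : ℤ) =
        if v = 0 then 1 else 1 + quadraticChar K (B ^ 2 - A * C) := by
    intro v
    have e : (univ.filter fun u : K => A * u ^ 2 + 2 * B * u * v + C * v ^ 2 = 0).card =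
        (univ.filter fun w : K => w ^ 2 = (B ^ 2 - A * C) * v ^ 2).card := by
      refine card_nbij' (fun u => A * u + B * v) (fun w => (w - B * v) / A) ?_ ?_ ?_ ?_
      · intro u hu
        simp only [coe_filter, mem_univ, true_and, Set.mem_ofPred_eq] at hu ⊢
        linear_combination A * hu
      · intro w hw
        simp only [coe_filter, mem_univ, true_and, Set.mem_ofPred_eq] at hw ⊢
        field_simp
        linear_combination hw
      · intro u _
        field_simp
        ring
      · intro w _
        field_simp
        ring
    rw [e, card_filter_sq_eq hK]
    split_ifs with hv
    · simp [hv]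
    · rw [quadraticChar_mul_sq hv, add_comm]
  push_cast
  rw [sum_congr rfl fun v _ => h v, ← add_sum_erase _ _ (mem_univ (0 : K)), if_pos rfl,
    sum_congr rfl fun v hv => if_neg (ne_of_mem_erase hv), sum_const,
    card_erase_of_mem (mem_univ _),
    card_univ, nsmul_eq_mul, Nat.cast_sub Fintype.card_pos, Nat.cast_one]

theorem card_binary_form_zeros (hK : ringChar K ≠ 2) {A B C : K}
    (h : ¬ (A = 0 ∧ B = 0 ∧ C = 0)) :
    ((univ.filter fun v : K × K => A * v.1 ^ 2 + 2 * B * v.1 * v.2 + C * v.2 ^ 2 = 0).card : ℤ) =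
      1 + (Fintype.card K - 1) * (1 + quadraticChar K (B ^ 2 - A * C)) := by
  by_cases hA : A = 0
  · by_cases hC : C = 0
    · subst hA hC
      have hB : B ≠ 0 := by simpa using h
      have h2 : (2 : K) ≠ 0 := Ring.two_ne_zero hK
      have e : (univ.filter fun v : K × K => 0 * v.1 ^ 2 + 2 * B * v.1 * v.2 + 0 * v.2 ^ 2 = 0) =
          univ.filter fun v : K × K => v.1 = 0 ∨ v.2 = 0 := by
        ext v
        simp [hB, h2]
      rw [e, card_filter_prod_eq_sum fun u v : K => u = 0 ∨ v = 0,
        ← add_sum_erase _ _ (mem_univ (0 : K))]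
      have e2 : ∀ v ∈ univ.erase (0 : K), (univ.filter fun u : K => u = 0 ∨ v = 0).card = 1 := by
        intro v hv
        rw [card_eq_one]
        exact ⟨0, by ext; simp [ne_of_mem_erase hv]⟩
      rw [sum_congr rfl e2]
      simp only [or_true, filter_true, sum_const, card_erase_of_mem (mem_univ (0 : K)), card_univ,
        smul_eq_mul, mul_one, zero_mul, sub_zero, quadraticChar_sq_one' hB]
      push_cast [Nat.cast_sub (Fintype.card_pos (α := K))]
      ring
    · have e : (univ.filter fun v : K × K =>
            A * v.1 ^ 2 + 2 * B * v.1 * v.2 + C * v.2 ^ 2 = 0).card =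
          (univ.filter fun v : K × K =>
            C * v.1 ^ 2 + 2 * B * v.1 * v.2 + A * v.2 ^ 2 = 0).card := by
        refine card_nbij' Prod.swap Prod.swap ?_ ?_ ?_ ?_
        · intro v hv
          simp only [coe_filter, mem_univ, true_and, Set.mem_ofPred_eq, Prod.fst_swap,
            Prod.snd_swap] at hv ⊢
          linear_combination hv
        · intro v hv
          simp only [coe_filter, mem_univ, true_and, Set.mem_ofPred_eq, Prod.fst_swap,
            Prod.snd_swap] at hv ⊢
          linear_combination hv
        · intro v _
          simp
        · intro v _
          simp
      rw [e, card_binary_form_zeros_of_ne hK hC, mul_comm C A]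
  · exact card_binary_form_zeros_of_ne hK hA

theorem card_isotropic_orthogonal_of_ne (hK : ringChar K ≠ 2) {x y z : K} (hz : z ≠ 0) :
    ((univ.filter fun v : K × K × K => v.1 ^ 2 + v.2.1 ^ 2 + v.2.2 ^ 2 = 0 ∧
      v.1 * x + v.2.1 * y + v.2.2 * z = 0).card : ℤ) =
      1 + (Fintype.card K - 1) * (1 + quadraticChar K (-(x ^ 2 + y ^ 2 + z ^ 2))) := by
  have e : (univ.filter fun v : K × K × K => v.1 ^ 2 + v.2.1 ^ 2 + v.2.2 ^ 2 = 0 ∧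
      v.1 * x + v.2.1 * y + v.2.2 * z = 0).card =
      (univ.filter fun v : K × K => (z ^ 2 + x ^ 2) * v.1 ^ 2 + 2 * (x * y) * v.1 * v.2 +
        (z ^ 2 + y ^ 2) * v.2 ^ 2 = 0).card := by
    refine card_nbij' (fun v => (v.1, v.2.1)) (fun v => (v.1, v.2, -(v.1 * x + v.2 * y) / z))
      ?_ ?_ ?_ ?_
    · rintro ⟨a, b, c⟩ hv
      simp only [coe_filter, mem_univ, true_and, Set.mem_ofPred_eq] at hv ⊢
      linear_combination z ^ 2 * hv.1 + (a * x + b * y - c * z) * hv.2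
    · rintro ⟨a, b⟩ hv
      simp only [coe_filter, mem_univ, true_and, Set.mem_ofPred_eq] at hv ⊢
      constructor
      · field_simp
        linear_combination hv
      · field_simp
        ring
    · rintro ⟨a, b, c⟩ hv
      simp only [coe_filter, mem_univ, true_and, Set.mem_ofPred_eq] at hv ⊢
      simp only [Prod.mk.injEq, true_and]
      field_simp
      linear_combination -hv.2
    · rintro ⟨a, b⟩ _
      rfl
  rw [e, card_binary_form_zeros hK]
  · rw [← quadraticChar_mul_sq (D := -(x ^ 2 + y ^ 2 + z ^ 2)) hz]
    congr 4
    ring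
  · rintro ⟨h1, h2, h3⟩
    rcases mul_eq_zero.1 h2 with rfl | rfl
    · exact hz (by simpa using h1)
    · exact hz (by simpa using h3)

theorem card_isotropic_orthogonal_rotate (x y z : K) :
    (univ.filter fun v : K × K × K => v.1 ^ 2 + v.2.1 ^ 2 + v.2.2 ^ 2 = 0 ∧
      v.1 * x + v.2.1 * y + v.2.2 * z = 0).card =
    (univ.filter fun v : K × K × K => v.1 ^ 2 + v.2.1 ^ 2 + v.2.2 ^ 2 = 0 ∧
      v.1 * y + v.2.1 * z + v.2.2 * x = 0).card := by
  refine card_nbij' (fun v => (v.2.1, v.2.2, v.1)) (fun v => (v.2.2, v.1, v.2.1)) ?_ ?_ ?_ ?_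
  · rintro ⟨a, b, c⟩ hv
    simp only [coe_filter, mem_univ, true_and, Set.mem_ofPred_eq] at hv ⊢
    exact ⟨by linear_combination hv.1, by linear_combination hv.2⟩
  · rintro ⟨a, b, c⟩ hv
    simp only [coe_filter, mem_univ, true_and, Set.mem_ofPred_eq] at hv ⊢
    exact ⟨by linear_combination hv.1, by linear_combination hv.2⟩
  · rintro ⟨a, b, c⟩ _
    rfl
  · rintro ⟨a, b, c⟩ _
    rfl

theorem card_isotropic_orthogonal (hK : ringChar K ≠ 2) {x y z : K}
    (h : ¬ (x = 0 ∧ y = 0 ∧ z = 0)) :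
    ((univ.filter fun v : K × K × K => v.1 ^ 2 + v.2.1 ^ 2 + v.2.2 ^ 2 = 0 ∧
      v.1 * x + v.2.1 * y + v.2.2 * z = 0).card : ℤ) =
      1 + (Fintype.card K - 1) * (1 + quadraticChar K (-(x ^ 2 + y ^ 2 + z ^ 2))) := by
  by_cases hz : z = 0
  · by_cases hx : x = 0
    · have hy : y ≠ 0 := fun hy => h ⟨hx, hy, hz⟩
      rw [card_isotropic_orthogonal_rotate, card_isotropic_orthogonal_rotate,
        card_isotropic_orthogonal_of_ne hK hy]
      congr 4
      ring
    · rw [card_isotropic_orthogonal_rotate, card_isotropic_orthogonal_of_ne hK hx]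
      congr 4
      ring
  · exact card_isotropic_orthogonal_of_ne hK hz

theorem sum_quadraticChar_sq_add_sq (p : ℕ) [Fact p.Prime] (hp2 : p ≠ 2) :
    ∑ v : ZMod p × ZMod p, quadraticChar (ZMod p) (-(v.1 ^ 2 + v.2 ^ 2)) = 0 := by
  obtain ⟨t, ht⟩ := quadraticChar_exists_neg_one (F := ZMod p) (by rwa [ZMod.ringChar_zmod_n])
  have ht0 : t ≠ 0 := by
    rintro rfl
    simp at ht
  obtain ⟨a, b, hab⟩ := ZMod.sq_add_sq p t
  have hbij : Function.Bijective fun v : ZMod p × ZMod p =>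
      (a * v.1 - b * v.2, b * v.1 + a * v.2) := by
    rw [Fintype.bijective_iff_injective_and_card]
    refine ⟨?_, rfl⟩
    rintro ⟨x, y⟩ ⟨x', y'⟩ h
    simp only [Prod.mk.injEq] at h ⊢
    constructor
    · apply mul_left_cancel₀ ht0
      rw [← hab]
      linear_combination a * h.1 + b * h.2
    · apply mul_left_cancel₀ ht0
      rw [← hab]
      linear_combination a * h.2 - b * h.1
  have h := Function.Bijective.sum_comp hbij
    fun v : ZMod p × ZMod p => quadraticChar (ZMod p) (-(v.1 ^ 2 + v.2 ^ 2))
  have h2 : ∀ v : ZMod p × ZMod p,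
      quadraticChar (ZMod p) (-((a * v.1 - b * v.2) ^ 2 + (b * v.1 + a * v.2) ^ 2)) =
        -quadraticChar (ZMod p) (-(v.1 ^ 2 + v.2 ^ 2)) := by
    intro v
    rw [← neg_one_mul (quadraticChar (ZMod p) _), ← ht, ← map_mul, ← hab]
    congr 1
    ring
  simp only [h2, sum_neg_distrib] at h
  linarith

theorem card_isotropic (p : ℕ) [Fact p.Prime] (hp2 : p ≠ 2) :
    ((univ.filter fun v : ZMod p × ZMod p × ZMod p =>
      v.1 ^ 2 + v.2.1 ^ 2 + v.2.2 ^ 2 = 0).card : ℤ) = (p : ℤ) ^ 2 := by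
  rw [card_filter_prod_eq_sum fun (x : ZMod p) (v : ZMod p × ZMod p) =>
    x ^ 2 + v.1 ^ 2 + v.2 ^ 2 = 0]
  have h : ∀ v : ZMod p × ZMod p,
      ((univ.filter fun x : ZMod p => x ^ 2 + v.1 ^ 2 + v.2 ^ 2 = 0).card : ℤ) =
        quadraticChar (ZMod p) (-(v.1 ^ 2 + v.2 ^ 2)) + 1 := by
    intro v
    rw [← card_filter_sq_eq (by rwa [ZMod.ringChar_zmod_n])]
    congr 3
    ext x
    constructor <;> intro h <;> linear_combination h
  push_cast
  rw [sum_congr rfl fun v _ => h v, sum_add_distrib, sum_quadraticChar_sq_add_sq p hp2]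
  simp [ZMod.card, pow_two]

theorem card_proportional {x y z : K} (h : ¬ (x = 0 ∧ y = 0 ∧ z = 0)) :
    (univ.filter fun v : K × K × K => v ≠ 0 ∧ v.2.1 * z = v.2.2 * y ∧ v.2.2 * x = v.1 * z ∧
      v.1 * y = v.2.1 * x).card = Fintype.card K - 1 := by
  rw [← card_univ, ← card_erase_of_mem (mem_univ (0 : K)), eq_comm]
  have hne : ∀ c : K, c * x = 0 → c * y = 0 → c * z = 0 → c = 0 := by
    intro c h1 h2 h3
    by_contra hc
    exact h ⟨(mul_eq_zero.1 h1).resolve_left hc, (mul_eq_zero.1 h2).resolve_left hc,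
      (mul_eq_zero.1 h3).resolve_left hc⟩
  refine card_nbij (fun c => (c * x, c * y, c * z)) ?_ ?_ ?_
  · intro c hc
    simp only [coe_erase, coe_univ, Set.mem_sdiff, Set.mem_univ, true_and, Set.mem_singleton_iff,
      coe_filter, mem_univ, Set.mem_ofPred_eq] at hc ⊢
    refine ⟨fun h0 => hc ?_, by ring, by ring, by ring⟩
    simp only [Prod.mk_eq_zero] at h0
    exact hne c h0.1 h0.2.1 h0.2.2
  · intro c _ c' _ hcc
    simp only [Prod.mk.injEq] at hcc
    exact sub_eq_zero.1 (hne (c - c') (by linear_combination hcc.1) (by linear_combination hcc.2.1)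
      (by linear_combination hcc.2.2))
  · rintro ⟨a, b, c⟩ hv
    simp only [coe_filter, mem_univ, true_and, Set.mem_ofPred_eq] at hv
    obtain ⟨h0, h1, h2, h3⟩ := hv
    have key : ∃ k, k * x = a ∧ k * y = b ∧ k * z = c := by
      by_cases hx : x = 0
      · by_cases hy : y = 0
        · have hz : z ≠ 0 := fun hz => h ⟨hx, hy, hz⟩
          exact ⟨c / z, by field_simp; linear_combination h2, by field_simp; linear_combination -h1,
            by field_simp⟩
        · exact ⟨b / y, by field_simp; linear_combination -h3, by field_simp,
            by field_simp; linear_combination h1⟩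
      · exact ⟨a / x, by field_simp, by field_simp; linear_combination h3,
          by field_simp; linear_combination -h2⟩
    obtain ⟨k, h4, h5, h6⟩ := key
    refine ⟨k, ?_, by simp [h4, h5, h6]⟩
    simp only [coe_erase, coe_univ, Set.mem_sdiff, Set.mem_univ, true_and, Set.mem_singleton_iff]
    rintro rfl
    exact h0 (by simp [← h4, ← h5, ← h6])

end FiniteFieldCounts

section HurwitzRecursion

open Quaternion Finset

/-- The purely imaginary quaternion with the given coordinates. -/
def pureQuat {R : Type*} [CommRing R] (v : R × R × R) : ℍ[R] := quatMk 0 v.1 v.2.1 v.2.2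

@[simp] theorem pureQuat_re {R : Type*} [CommRing R] (v : R × R × R) : (pureQuat v).re = 0 := rfl

theorem normSq_pureQuat {R : Type*} [CommRing R] (v : R × R × R) :
    normSq (pureQuat v) = v.1 ^ 2 + v.2.1 ^ 2 + v.2.2 ^ 2 := by
  simp [normSq_def', pureQuat]

theorem pureQuat_injective {R : Type*} [CommRing R] :
    Function.Injective (pureQuat : R × R × R → ℍ[R]) := by
  rintro ⟨a, b, c⟩ ⟨a', b', c'⟩ h
  have h1 := congrArg QuaternionAlgebra.imI h
  have h2 := congrArg QuaternionAlgebra.imJ h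
  have h3 := congrArg QuaternionAlgebra.imK h
  simp only [pureQuat, quatMk_imI, quatMk_imJ, quatMk_imK] at h1 h2 h3
  simp [h1, h2, h3]

theorem pureQuat_zero {R : Type*} [CommRing R] : pureQuat (0 : R × R × R) = 0 := rfl

theorem pureQuat_ne_zero {R : Type*} [CommRing R] {v : R × R × R} (h : v ≠ 0) :
    pureQuat v ≠ 0 := by
  rw [← pureQuat_zero]
  exact fun h' => h (pureQuat_injective h')

theorem exists_pureQuat_eq {R : Type*} [CommRing R] {q : ℍ[R]} (h : q.re = 0) :
    ∃ v, pureQuat v = q :=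
  ⟨(q.imI, q.imJ, q.imK), by ext <;> simp [pureQuat, h]⟩

/-- Coordinatewise reduction of an integral triple modulo `p`. -/
def tripleRed (p : ℕ) (x : ℤ × ℤ × ℤ) : ZMod p × ZMod p × ZMod p :=
  ((x.1 : ZMod p), (x.2.1 : ZMod p), (x.2.2 : ZMod p))

theorem quatRed_pureQuat (p : ℕ) (x : ℤ × ℤ × ℤ) :
    quatRed p (pureQuat x) = pureQuat (tripleRed p x) := by
  ext <;> simp [quatRed, pureQuat, tripleRed]

theorem pureQuat_smul (k : ℤ) (x : ℤ × ℤ × ℤ) : pureQuat (k • x) = k • pureQuat x := by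
  ext <;> simp [pureQuat]

theorem tripleRed_eq_zero_iff (p : ℕ) (x : ℤ × ℤ × ℤ) :
    tripleRed p x = 0 ↔ ∃ y, x = (p : ℤ) • y := by
  obtain ⟨a, b, c⟩ := x
  simp only [tripleRed, Prod.mk_eq_zero, ZMod.intCast_zmod_eq_zero_iff_dvd]
  constructor
  · rintro ⟨⟨a', rfl⟩, ⟨b', rfl⟩, ⟨c', rfl⟩⟩
    exact ⟨(a', b', c'), by simp⟩
  · rintro ⟨⟨a', b', c'⟩, h⟩
    simp only [Prod.smul_mk, smul_eq_mul, Prod.mk.injEq] at h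
    exact ⟨⟨a', h.1⟩, ⟨b', h.2.1⟩, ⟨c', h.2.2⟩⟩

/-- The integral triples of norm `n`. -/
noncomputable def sphere (n : ℕ) : Finset (ℤ × ℤ × ℤ) :=
  (Icc (-(n : ℤ)) n ×ˢ Icc (-(n : ℤ)) n ×ˢ Icc (-(n : ℤ)) n).filter
    fun v => v.1 ^ 2 + v.2.1 ^ 2 + v.2.2 ^ 2 = n

theorem mem_sphere {n : ℕ} {v : ℤ × ℤ × ℤ} :
    v ∈ sphere n ↔ v.1 ^ 2 + v.2.1 ^ 2 + v.2.2 ^ 2 = n := by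
  simp only [sphere, mem_filter, mem_product, mem_Icc, and_iff_right_iff_imp]
  intro h
  have key : ∀ a : ℤ, a ^ 2 ≤ n → -(n : ℤ) ≤ a ∧ a ≤ n := by
    intro a ha
    have h1 := Int.le_self_sq a
    have h2 := Int.le_self_sq (-a)
    rw [neg_sq] at h2
    constructor <;> linarith
  refine ⟨key _ ?_, key _ ?_, key _ ?_⟩ <;>
    nlinarith [sq_nonneg v.1, sq_nonneg v.2.1, sq_nonneg v.2.2]

theorem mem_sphere_iff_normSq {n : ℕ} {v : ℤ × ℤ × ℤ} :
    v ∈ sphere n ↔ normSq (pureQuat v) = (n : ℤ) := by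
  rw [mem_sphere, normSq_pureQuat]

theorem smul_mem_sphere {k n : ℕ} (hk : k ≠ 0) {v : ℤ × ℤ × ℤ} :
    (k : ℤ) • v ∈ sphere (k ^ 2 * n) ↔ v ∈ sphere n := by
  have hk0 : (k : ℤ) ^ 2 ≠ 0 := by exact_mod_cast pow_ne_zero 2 hk
  rw [mem_sphere_iff_normSq, mem_sphere_iff_normSq, pureQuat_smul, normSq_smul]
  push_cast
  exact mul_right_inj' hk0

variable (p : ℕ) [hp : Fact p.Prime]

/-- The nonzero isotropic triples modulo `p`. -/
def isotropicTriples : Finset (ZMod p × ZMod p × ZMod p) :=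
  univ.filter fun v => v ≠ 0 ∧ v.1 ^ 2 + v.2.1 ^ 2 + v.2.2 ^ 2 = 0

variable {p}

theorem filter_sphere_tripleRed_eq_zero (n : ℕ) :
    (sphere (p ^ 2 * n)).filter (fun x => tripleRed p x = 0) =
      (sphere n).image fun x => (p : ℤ) • x := by
  ext x
  simp only [mem_filter, mem_image, tripleRed_eq_zero_iff]
  constructor
  · rintro ⟨h, y, rfl⟩
    exact ⟨y, (smul_mem_sphere hp.out.ne_zero).1 h, rfl⟩
  · rintro ⟨y, hy, rfl⟩
    exact ⟨(smul_mem_sphere hp.out.ne_zero).2 hy, y, rfl⟩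

theorem smul_triple_injective : Function.Injective fun x : ℤ × ℤ × ℤ => (p : ℤ) • x :=
  smul_right_injective _ (by exact_mod_cast hp.out.ne_zero)

theorem card_filter_tripleRed_eq_zero (n : ℕ) :
    ((sphere (p ^ 2 * n)).filter (fun x => tripleRed p x = 0)).card = (sphere n).card := by
  rw [filter_sphere_tripleRed_eq_zero, card_image_of_injective _ smul_triple_injective]

open Classical in
theorem card_conj_fibre (n : ℕ) {α : ℍ[ℤ]} (hα : normSq α = (p : ℤ)) :
    ((sphere (p ^ 2 * n)).filter fun x =>
      ∃ y, star α * pureQuat x * α = ((p : ℤ) ^ 2) • y).card = (sphere n).card := by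
  have hp0 : (p : ℤ) ^ 2 ≠ 0 := by exact_mod_cast pow_ne_zero 2 hp.out.ne_zero
  have hre : ∀ (a x : ℍ[ℤ]), x.re = 0 → (a * x * star a).re = 0 := by
    intro a x hx
    simp only [re_mul, imI_mul, imJ_mul, imK_mul, hx, re_star, imI_star, imJ_star, imK_star]
    ring
  have hex : ∀ y : ℤ × ℤ × ℤ, ∃ v, pureQuat v = α * pureQuat y * star α :=
    fun y => exists_pureQuat_eq (hre _ _ rfl)
  choose F hF using hex
  refine (card_nbij F ?_ ?_ ?_).symm
  · intro y hy
    simp only [coe_filter, Set.mem_ofPred_eq, mem_coe] at hy ⊢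
    rw [mem_sphere_iff_normSq] at hy
    refine ⟨?_, pureQuat y, by rw [hF, conj_mul_conj hα]⟩
    rw [mem_sphere_iff_normSq, hF, map_mul, map_mul, normSq_star, hα, hy]
    push_cast
    ring
  · intro y _ y' _ h
    have h1 := congrArg (fun v => star α * pureQuat v * α) h
    simp only [hF, conj_mul_conj hα] at h1
    exact pureQuat_injective (smul_left_cancel_int hp0 h1)
  · intro x hx
    simp only [coe_filter, Set.mem_ofPred_eq] at hx
    obtain ⟨hx, y, hy⟩ := hx
    have hyre : y.re = 0 := by
      have h := hre (star α) (pureQuat x) rfl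
      rw [star_star, hy, re_smul, smul_eq_mul] at h
      exact (mul_eq_zero.1 h).resolve_left hp0
    obtain ⟨v, rfl⟩ := exists_pureQuat_eq hyre
    have hxv := eq_mul_of_conj_eq hα hy
    refine ⟨v, ?_, pureQuat_injective (by rw [hF, hxv])⟩
    rw [mem_coe, mem_sphere_iff_normSq]
    rw [mem_sphere_iff_normSq, hxv, map_mul, map_mul, normSq_star, hα] at hx
    apply mul_left_cancel₀ hp0
    push_cast at hx
    linear_combination hx

theorem re_pureQuat_mul (v w : ZMod p × ZMod p × ZMod p) :
    (pureQuat v * pureQuat w).re = 0 ↔ v.1 * w.1 + v.2.1 * w.2.1 + v.2.2 * w.2.2 = 0 := by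
  rw [← neg_eq_zero]
  simp only [pureQuat, re_mul, quatMk_re, quatMk_imI, quatMk_imJ, quatMk_imK]
  ring_nf

theorem not_coords_zero {v : ZMod p × ZMod p × ZMod p} (h : v ≠ 0) :
    ¬ (v.1 = 0 ∧ v.2.1 = 0 ∧ v.2.2 = 0) := by
  rintro ⟨h1, h2, h3⟩
  exact h (Prod.ext h1 (Prod.ext h2 h3))

theorem card_isotropicTriples (hp2 : p ≠ 2) :
    ((isotropicTriples p).card : ℤ) = (p : ℤ) ^ 2 - 1 := by
  have h : isotropicTriples p = (univ.filter fun v : ZMod p × ZMod p × ZMod p =>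
      v.1 ^ 2 + v.2.1 ^ 2 + v.2.2 ^ 2 = 0).erase 0 := by
    ext v
    simp [isotropicTriples]
  rw [h, cast_card_erase_of_mem (by simp), card_isotropic p hp2]

theorem card_isotropicTriples_orthogonal (hp2 : p ≠ 2) {w : ZMod p × ZMod p × ZMod p}
    (hw : w ≠ 0) :
    (((isotropicTriples p).filter fun l => (pureQuat l * pureQuat w).re = 0).card : ℤ) =
      (p - 1) * (1 + quadraticChar (ZMod p) (-(w.1 ^ 2 + w.2.1 ^ 2 + w.2.2 ^ 2))) := by
  have h : ((isotropicTriples p).filter fun l => (pureQuat l * pureQuat w).re = 0) =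
      (univ.filter fun v : ZMod p × ZMod p × ZMod p => v.1 ^ 2 + v.2.1 ^ 2 + v.2.2 ^ 2 = 0 ∧
        v.1 * w.1 + v.2.1 * w.2.1 + v.2.2 * w.2.2 = 0).erase 0 := by
    ext v
    simp only [isotropicTriples, mem_filter, mem_univ, true_and, mem_erase, re_pureQuat_mul,
      and_assoc]
  rw [h, cast_card_erase_of_mem (by simp), card_isotropic_orthogonal
    (by rwa [ZMod.ringChar_zmod_n]) (not_coords_zero hw), ZMod.card]
  ring

open Classical in
theorem card_isotropicTriples_parallel {w : ZMod p × ZMod p × ZMod p}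
    (hw : w ≠ 0) (hw0 : w.1 ^ 2 + w.2.1 ^ 2 + w.2.2 ^ 2 = 0) :
    (((isotropicTriples p).filter fun l => pureQuat l * pureQuat w = 0).card : ℤ) = p - 1 := by
  have h : ((isotropicTriples p).filter fun l => pureQuat l * pureQuat w = 0) =
      univ.filter fun v : ZMod p × ZMod p × ZMod p => v ≠ 0 ∧ v.2.1 * w.2.2 = v.2.2 * w.2.1 ∧
        v.2.2 * w.1 = v.1 * w.2.2 ∧ v.1 * w.2.1 = v.2.1 * w.1 := by
    obtain ⟨x, y, z⟩ := w
    ext ⟨a, b, c⟩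
    simp only [isotropicTriples, mem_filter, mem_univ, true_and]
    constructor
    · rintro ⟨⟨h0, h1⟩, h2⟩
      have e1 := congrArg QuaternionAlgebra.imI h2
      have e2 := congrArg QuaternionAlgebra.imJ h2
      have e3 := congrArg QuaternionAlgebra.imK h2
      simp only [pureQuat, imI_mul, imJ_mul, imK_mul, quatMk_re, quatMk_imI, quatMk_imJ,
        quatMk_imK, imI_zero, imJ_zero, imK_zero] at e1 e2 e3
      exact ⟨h0, by linear_combination e1, by linear_combination e2, by linear_combination e3⟩
    · rintro ⟨h0, e1, e2, e3⟩
      simp only at hw0 e1 e2 e3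
      have key : ∃ k, a = k * x ∧ b = k * y ∧ c = k * z := by
        have hw' := not_coords_zero hw
        simp only at hw'
        by_cases hx : x = 0
        · by_cases hy : y = 0
          · have hz : z ≠ 0 := fun hz => hw' ⟨hx, hy, hz⟩
            exact ⟨c / z, by field_simp; linear_combination -e2,
              by field_simp; linear_combination e1, by field_simp⟩
          · exact ⟨b / y, by field_simp; linear_combination e3, by field_simp,
              by field_simp; linear_combination -e1⟩
        · exact ⟨a / x, by field_simp, by field_simp; linear_combination -e3,
            by field_simp; linear_combination e2⟩
      obtain ⟨k, rfl, rfl, rfl⟩ := key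
      refine ⟨⟨h0, by linear_combination k ^ 2 * hw0⟩, ?_⟩
      ext <;> simp only [pureQuat, re_mul, imI_mul, imJ_mul, imK_mul, quatMk_re, quatMk_imI,
        quatMk_imJ, quatMk_imK, re_zero, imI_zero, imJ_zero, imK_zero]
      · linear_combination -k * hw0
      all_goals ring
  rw [h, card_proportional (not_coords_zero hw), ZMod.card, Nat.cast_sub hp.out.one_le,
    Nat.cast_one]

/-- The Hurwitz relation between the numbers of representations of `n` and `p² n` as sums of
three squares. -/
theorem card_sphere_prime_sq_mul (hp2 : p ≠ 2) (n : ℕ) :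
    ((p : ℤ) + 1) * (sphere n).card =
      ((sphere (p ^ 2 * n)).card - (sphere n).card) +
      (1 + quadraticChar (ZMod p) (-(n : ZMod p))) *
        ((sphere n).card - ((sphere n).filter fun x => tripleRed p x = 0).card) +
      (p + 1) * ((sphere n).filter fun x => tripleRed p x = 0).card := by
  classical
  have hchoose : ∀ l : ZMod p × ZMod p × ZMod p, ∃ α : ℍ[ℤ], l ∈ isotropicTriples p →
      normSq α = (p : ℤ) ∧ pureQuat l * quatRed p α = 0 := by
    intro l
    by_cases hl : l ∈ isotropicTriples p
    · simp only [isotropicTriples, mem_filter, mem_univ, true_and] at hl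
      obtain ⟨α, h1, h2⟩ := exists_normSq_eq_prime_of_isotropic p hp2 (pureQuat l) rfl
        (by rw [normSq_pureQuat, hl.2]) (pureQuat_ne_zero hl.1)
      exact ⟨α, fun _ => ⟨h1, h2⟩⟩
    · exact ⟨0, fun h => absurd h hl⟩
  choose A hA using hchoose
  let C : (ZMod p × ZMod p × ZMod p) → (ℤ × ℤ × ℤ) → Prop := fun l x =>
    ∃ y, star (A l) * pureQuat x * A l = ((p : ℤ) ^ 2) • y
  have hcount := sum_card_bipartiteAbove_eq_sum_card_bipartiteBelow (s := isotropicTriples p)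
    (t := sphere (p ^ 2 * n)) C
  have hleft : ∀ l ∈ isotropicTriples p,
      (bipartiteAbove C (sphere (p ^ 2 * n)) l).card = (sphere n).card :=
    fun l hl => card_conj_fibre n (hA l hl).1
  have hred : ∀ (m : ℕ) (x : ℤ × ℤ × ℤ), x ∈ sphere m → (tripleRed p x).1 ^ 2 +
      (tripleRed p x).2.1 ^ 2 + (tripleRed p x).2.2 ^ 2 = (m : ZMod p) := by
    intro m x hx
    rw [mem_sphere] at hx
    have := congrArg (Int.cast : ℤ → ZMod p) hx
    push_cast at this
    simpa [tripleRed] using this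
  have hprim : ∀ x ∈ sphere (p ^ 2 * n), tripleRed p x ≠ 0 →
      ((bipartiteBelow C (isotropicTriples p) x).card : ℤ) = p - 1 := by
    intro x hx h0
    rw [← card_isotropicTriples_parallel h0 (by rw [hred _ x hx]; simp)]
    congr 2
    refine filter_congr fun l hl => ?_
    have hA' := hA l hl
    simp only [isotropicTriples, mem_filter, mem_univ, true_and] at hl
    rw [← quatRed_pureQuat]
    exact conj_dvd_iff_of_primitive hp2 rfl (pureQuat_ne_zero hl.1) hA'.1 hA'.2 rfl
      (by rw [quatRed_pureQuat]; exact pureQuat_ne_zero h0) (n := n)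
      (by rw [mem_sphere_iff_normSq.1 hx]; push_cast; rfl)
  have himprim : ∀ x : ℤ × ℤ × ℤ, bipartiteBelow C (isotropicTriples p) ((p : ℤ) • x) =
      (isotropicTriples p).filter fun l => (pureQuat l * pureQuat (tripleRed p x)).re = 0 := by
    intro x
    refine filter_congr fun l hl => ?_
    have hA' := hA l hl
    simp only [isotropicTriples, mem_filter, mem_univ, true_and] at hl
    rw [← quatRed_pureQuat]
    simp only [C, pureQuat_smul]
    exact conj_smul_dvd_iff hp2 rfl (pureQuat_ne_zero hl.1) (by rw [normSq_pureQuat, hl.2])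
      hA'.1 hA'.2 rfl
  have hsub : ∀ m : ℕ, (((sphere m).filter fun x => ¬ tripleRed p x = 0).card : ℤ) =
      (sphere m).card - ((sphere m).filter fun x => tripleRed p x = 0).card := by
    intro m
    rw [← card_filter_add_card_filter_not (s := sphere m) (fun x => tripleRed p x = 0)]
    push_cast
    ring
  rw [sum_congr rfl hleft, sum_const, smul_eq_mul,
    ← sum_filter_add_sum_filter_not _ (fun x => tripleRed p x = 0),
    filter_sphere_tripleRed_eq_zero, sum_image fun a _ b _ h => smul_triple_injective h,
    ← sum_filter_add_sum_filter_not (sphere n) (fun x => tripleRed p x = 0)] at hcount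
  have hcount' := congrArg (Nat.cast : ℕ → ℤ) hcount
  push_cast at hcount'
  have s1 : ∀ x ∈ (sphere n).filter (fun x => tripleRed p x = 0),
      ((bipartiteBelow C (isotropicTriples p) ((p : ℤ) • x)).card : ℤ) = (p : ℤ) ^ 2 - 1 := by
    intro x hx
    rw [himprim, (mem_filter.1 hx).2, pureQuat_zero, ← card_isotropicTriples hp2]
    simp
  have s2 : ∀ x ∈ (sphere n).filter (fun x => ¬ tripleRed p x = 0),
      ((bipartiteBelow C (isotropicTriples p) ((p : ℤ) • x)).card : ℤ) =
        (p - 1) * (1 + quadraticChar (ZMod p) (-(n : ZMod p))) := by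
    intro x hx
    rw [mem_filter] at hx
    rw [himprim, card_isotropicTriples_orthogonal hp2 hx.2, hred n x hx.1]
  have s3 : ∀ x ∈ (sphere (p ^ 2 * n)).filter (fun x => ¬ tripleRed p x = 0),
      ((bipartiteBelow C (isotropicTriples p) x).card : ℤ) = p - 1 :=
    fun x hx => hprim x (mem_filter.1 hx).1 (mem_filter.1 hx).2
  rw [sum_congr rfl s1, sum_congr rfl s2, sum_congr rfl s3, card_isotropicTriples hp2] at hcount'
  simp only [sum_const, nsmul_eq_mul, hsub, card_filter_tripleRed_eq_zero] at hcount'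
  have hp1 : (p : ℤ) - 1 ≠ 0 := by
    have := hp.out.two_le
    omega
  apply mul_left_cancel₀ hp1
  linear_combination hcount'

end HurwitzRecursion

section EulerFactors

open ArithmeticFunction Finset

open scoped ArithmeticFunction.zeta

variable (χ : ℕ → ℚ)

/-- The arithmetic function `n ↦ n` with rational values. -/
def ratId : ArithmeticFunction ℚ := ((ArithmeticFunction.id : ArithmeticFunction ℕ) :)

theorem ratId_apply (n : ℕ) : ratId n = n := by
  simp [ratId]

theorem isMultiplicative_ratId : ratId.IsMultiplicative :=
  isMultiplicative_id.natCast

/-- The product of the inverse Euler factors `1 - χ(p) / p` over the primes dividing `n`. -/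
def eulerProd : ArithmeticFunction ℚ := prodPrimeFactors fun p => 1 - (p : ℚ)⁻¹ * χ p

theorem eulerProd_apply {n : ℕ} (hn : n ≠ 0) :
    eulerProd χ n = ∏ p ∈ n.primeFactors, (1 - (p : ℚ)⁻¹ * χ p) :=
  prodPrimeFactors_apply hn

theorem isMultiplicative_eulerProd : (eulerProd χ).IsMultiplicative :=
  IsMultiplicative.prodPrimeFactors _

theorem eulerProd_prime_pow_succ {p : ℕ} (hp : p.Prime) (k : ℕ) :
    eulerProd χ (p ^ (k + 1)) = 1 - (p : ℚ)⁻¹ * χ p := by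
  rw [eulerProd_apply χ (pow_ne_zero _ hp.ne_zero), Nat.primeFactors_prime_pow k.succ_ne_zero hp,
    prod_singleton]

/-- The arithmetic function `n ↦ n ∏ (1 - χ(p) / p)`. -/
def twistedTotient : ArithmeticFunction ℚ := ratId.pmul (eulerProd χ)

theorem isMultiplicative_twistedTotient : (twistedTotient χ).IsMultiplicative :=
  isMultiplicative_ratId.pmul (isMultiplicative_eulerProd χ)

theorem twistedTotient_apply (n : ℕ) : twistedTotient χ n = n * eulerProd χ n := by
  rw [twistedTotient, pmul_apply, ratId_apply]

/-- The arithmetic function `n ↦ ∑ c ∣ n, c ∏ (1 - χ(p) / p)`. -/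
noncomputable def hurwitzFactor : ArithmeticFunction ℚ :=
  twistedTotient χ * (ζ : ArithmeticFunction ℚ)

theorem isMultiplicative_hurwitzFactor : (hurwitzFactor χ).IsMultiplicative :=
  (isMultiplicative_twistedTotient χ).mul isMultiplicative_zeta.natCast

theorem hurwitzFactor_prime_pow {p : ℕ} (hp : p.Prime) (k : ℕ) :
    hurwitzFactor χ (p ^ k) = ∑ i ∈ range (k + 1), twistedTotient χ (p ^ i) := by
  rw [hurwitzFactor, coe_mul_zeta_apply, Nat.sum_divisors_prime_pow hp]

theorem hurwitzFactor_prime_pow_succ {p : ℕ} (hp : p.Prime) (k : ℕ) :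
    hurwitzFactor χ (p ^ (k + 1)) =
      hurwitzFactor χ (p ^ k) + (p : ℚ) ^ k * (p - χ p) := by
  have : (p : ℚ) ≠ 0 := by exact_mod_cast hp.ne_zero
  rw [hurwitzFactor_prime_pow χ hp, sum_range_succ, ← hurwitzFactor_prime_pow χ hp,
    twistedTotient_apply, eulerProd_prime_pow_succ χ hp]
  push_cast
  field_simp
  ring

/-- The arithmetic function `n ↦ 2 ^ ω(n) / n`. -/
noncomputable def twoPowOmegaDiv : ArithmeticFunction ℚ :=
  (prodPrimeFactors fun _ => (2 : ℚ)).pdiv ratId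

theorem twoPowOmegaDiv_apply {n : ℕ} (hn : n ≠ 0) :
    twoPowOmegaDiv n = 2 ^ n.primeFactors.card / n := by
  rw [twoPowOmegaDiv, pdiv_apply, ratId_apply, prodPrimeFactors_apply hn, prod_const]

theorem isMultiplicative_twoPowOmegaDiv : twoPowOmegaDiv.IsMultiplicative :=
  (IsMultiplicative.prodPrimeFactors _).pdiv isMultiplicative_ratId

theorem twoPowOmegaDiv_mul_eulerProd_prime_pow {p : ℕ} (hp : p.Prime) (k : ℕ) :
    (p : ℚ) ^ (k + 1) * (twoPowOmegaDiv * eulerProd χ) (p ^ (k + 1)) =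
      hurwitzFactor χ (p ^ (k + 1)) + hurwitzFactor χ (p ^ k) := by
  have hp0 : (p : ℚ) ≠ 0 := by exact_mod_cast hp.ne_zero
  rw [mul_apply, Nat.sum_divisorsAntidiagonal' fun x y => twoPowOmegaDiv x * eulerProd χ y,
    Nat.sum_divisors_prime_pow hp, sum_range_succ, Nat.div_self (pow_pos hp.pos _),
    isMultiplicative_twoPowOmegaDiv.map_one, hurwitzFactor_prime_pow χ hp,
    hurwitzFactor_prime_pow χ hp, sum_range_succ _ (k + 1), add_right_comm, ← two_mul,
    mul_add, mul_sum, mul_sum]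
  congr 1
  · refine sum_congr rfl fun i hi => ?_
    have hik : i ≤ k := Nat.lt_succ_iff.1 (mem_range.1 hi)
    obtain ⟨j, rfl⟩ := Nat.exists_eq_add_of_le hik
    rw [show i + j + 1 = i + (j + 1) by ring, pow_add p, Nat.mul_div_cancel_left _
      (pow_pos hp.pos _), twoPowOmegaDiv_apply (pow_ne_zero _ hp.ne_zero),
      Nat.primeFactors_prime_pow j.succ_ne_zero hp, card_singleton, twistedTotient_apply]
    push_cast
    field_simp
    ring
  · rw [twistedTotient_apply]
    push_cast
    ring

/-- The Möbius inverse of the square of `hurwitzFactor`. -/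
noncomputable def primitiveFactor : ArithmeticFunction ℚ :=
  (twistedTotient χ).pmul (ratId.pmul (twoPowOmegaDiv * eulerProd χ))

theorem isMultiplicative_primitiveFactor : (primitiveFactor χ).IsMultiplicative :=
  (isMultiplicative_twistedTotient χ).pmul (isMultiplicative_ratId.pmul
    (isMultiplicative_twoPowOmegaDiv.mul (isMultiplicative_eulerProd χ)))

theorem primitiveFactor_mul_zeta :
    primitiveFactor χ * (ζ : ArithmeticFunction ℚ) =
      (hurwitzFactor χ).pmul (hurwitzFactor χ) := by
  rw [IsMultiplicative.eq_iff_eq_on_prime_powers _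
    ((isMultiplicative_primitiveFactor χ).mul isMultiplicative_zeta.natCast) _
    ((isMultiplicative_hurwitzFactor χ).pmul (isMultiplicative_hurwitzFactor χ))]
  intro p k hp
  rw [coe_mul_zeta_apply, Nat.sum_divisors_prime_pow hp, pmul_apply]
  induction k with
  | zero =>
    simp [(isMultiplicative_primitiveFactor χ).map_one,
      (isMultiplicative_hurwitzFactor χ).map_one]
  | succ k ih =>
    have hp0 : (p : ℚ) ≠ 0 := by exact_mod_cast hp.ne_zero
    rw [sum_range_succ, ih, primitiveFactor, pmul_apply, pmul_apply, ratId_apply, Nat.cast_pow,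
      twoPowOmegaDiv_mul_eulerProd_prime_pow χ hp, twistedTotient_apply,
      eulerProd_prime_pow_succ χ hp, hurwitzFactor_prime_pow_succ χ hp]
    push_cast
    field_simp
    ring

theorem sum_divisors_primitiveFactor (n : ℕ) :
    ∑ c ∈ n.divisors, primitiveFactor χ c = hurwitzFactor χ n ^ 2 := by
  rw [← coe_mul_zeta_apply, primitiveFactor_mul_zeta, pmul_apply, sq]

theorem primitiveFactor_eq {n : ℕ} (hn : n ≠ 0) :
    primitiveFactor χ n = (n : ℚ) ^ 2 * ∑ c ∈ n.divisors,
      ((2 ^ c.primeFactors.card : ℚ) / (c : ℚ)) * ∏ p ∈ n.primeFactors,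
        (1 - (p : ℚ)⁻¹ * χ p) ^ (if p ∣ n / c then 2 else 1) := by
  rw [primitiveFactor, pmul_apply, pmul_apply, ratId_apply, twistedTotient_apply, mul_apply,
    Nat.sum_divisorsAntidiagonal fun x y => twoPowOmegaDiv x * eulerProd χ y, mul_sum, mul_sum,
    mul_sum]
  refine sum_congr rfl fun c hc => ?_
  have hcn := Nat.dvd_of_mem_divisors hc
  have hc0 : c ≠ 0 := ne_zero_of_dvd_ne_zero hn hcn
  have hnc : n / c ≠ 0 := (Nat.div_pos (Nat.le_of_dvd (Nat.pos_of_ne_zero hn) hcn)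
    (Nat.pos_of_ne_zero hc0)).ne'
  have hprod : ∏ p ∈ n.primeFactors, (1 - (p : ℚ)⁻¹ * χ p) ^ (if p ∣ n / c then 2 else 1) =
      eulerProd χ n * eulerProd χ (n / c) := by
    rw [eulerProd_apply χ hn, eulerProd_apply χ hnc]
    have hfilter : (n / c).primeFactors = n.primeFactors.filter (· ∣ n / c) := by
      ext p
      simp only [Nat.mem_primeFactors, mem_filter]
      exact ⟨fun h => ⟨⟨h.1, h.2.1.trans (Nat.div_dvd_of_dvd hcn), hn⟩, h.2.1⟩,
        fun h => ⟨h.1.1, h.2, hnc⟩⟩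
    rw [hfilter, prod_filter, ← prod_mul_distrib]
    refine prod_congr rfl fun p _ => ?_
    split_ifs <;> ring
  rw [hprod, twoPowOmegaDiv_apply hc0]
  ring

end EulerFactors

section SphereCounts

open Finset

section

variable {p : ℕ} [hp : Fact p.Prime]

theorem card_sphere_prime_sq_mul_of_not_dvd (hp2 : p ≠ 2) {n : ℕ} (hn : ¬ p ^ 2 ∣ n) :
    ((sphere (p ^ 2 * n)).card : ℤ) =
      (p + 1 - quadraticChar (ZMod p) (-(n : ZMod p))) * (sphere n).card := by
  have hempty : ((sphere n).filter fun x => tripleRed p x = 0) = ∅ := by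
    refine filter_eq_empty_iff.2 fun x hx hx0 => hn ?_
    obtain ⟨y, rfl⟩ := (tripleRed_eq_zero_iff p x).1 hx0
    rw [mem_sphere] at hx
    refine Int.natCast_dvd_natCast.1 ⟨y.1 ^ 2 + y.2.1 ^ 2 + y.2.2 ^ 2, ?_⟩
    rw [← hx]
    simp only [Prod.smul_fst, Prod.smul_snd, smul_eq_mul]
    push_cast
    ring
  have h := card_sphere_prime_sq_mul hp2 n
  rw [hempty, card_empty] at h
  push_cast at h
  linear_combination -h

theorem card_sphere_prime_sq_mul_prime_sq_mul (hp2 : p ≠ 2) (m : ℕ) :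
    ((sphere (p ^ 2 * (p ^ 2 * m))).card : ℤ) =
      (p + 1) * (sphere (p ^ 2 * m)).card - p * (sphere m).card := by
  have h := card_sphere_prime_sq_mul hp2 (p ^ 2 * m)
  rw [card_filter_tripleRed_eq_zero] at h
  have hchar : quadraticChar (ZMod p) (-((p ^ 2 * m : ℕ) : ZMod p)) = 0 := by
    rw [quadraticChar_eq_zero_iff]
    simp
  rw [hchar] at h
  linear_combination -h

end

theorem not_prime_sq_dvd_mul_sq {p d a : ℕ} (hp : p.Prime) (hd : Squarefree d) (ha : ¬ p ∣ a) :
    ¬ p ^ 2 ∣ d * a ^ 2 := by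
  intro h
  have hcop : Nat.Coprime (p ^ 2) (a ^ 2) :=
    Nat.Coprime.pow 2 2 ((Nat.Prime.coprime_iff_not_dvd hp).2 ha)
  have := hcop.dvd_of_dvd_mul_right h
  rw [sq] at this
  exact hp.one_lt.ne' (Nat.isUnit_iff.1 (hd p this))

theorem card_sphere_mul_sq {d : ℕ} (hd : Squarefree d) {f : ℕ} (hf : Odd f) :
    ((sphere (d * f ^ 2)).card : ℚ) =
      (sphere d).card * hurwitzFactor (fun p => ((jacobiSym (-(d : ℤ)) p : ℤ) : ℚ)) f := by
  set χ : ℕ → ℚ := fun p => ((jacobiSym (-(d : ℤ)) p : ℤ) : ℚ) with hχ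
  have hmul := isMultiplicative_hurwitzFactor χ
  induction f using Nat.recOnPrimePow with
  | zero => simp at hf
  | one => simp [hmul.map_one]
  | prime_pow_mul a p n hp hpa hn ih =>
    rw [Nat.odd_mul] at hf
    have ih := ih hf.2
    have hp2 : p ≠ 2 := by
      rintro rfl
      exact absurd ((Nat.odd_pow_iff hn.ne').1 hf.1) (by decide)
    have : Fact p.Prime := ⟨hp⟩
    have hcop : ∀ k, Nat.Coprime (p ^ k) a := fun k =>
      Nat.Coprime.pow_left k ((Nat.Prime.coprime_iff_not_dvd hp).2 hpa)
    have hχp : ((quadraticChar (ZMod p) (-((d * a ^ 2 : ℕ) : ZMod p)) : ℤ) : ℚ) = χ p := by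
      have ha0 : (a : ZMod p) ≠ 0 := by rwa [Ne, ZMod.natCast_eq_zero_iff]
      rw [hχ]
      simp only [← jacobiSym.legendreSym.to_jacobiSym, legendreSym]
      rw [show (-((d * a ^ 2 : ℕ) : ZMod p)) = ((-(d : ℤ) : ℤ) : ZMod p) * (a : ZMod p) ^ 2 by
        push_cast; ring, map_mul, quadraticChar_sq_one' ha0, mul_one]
    have key : ∀ k, ((sphere (d * (p ^ k * a) ^ 2)).card : ℚ) =
        (sphere d).card * hurwitzFactor χ (p ^ k * a) ∧
        ((sphere (d * (p ^ (k + 1) * a) ^ 2)).card : ℚ) =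
        (sphere d).card * hurwitzFactor χ (p ^ (k + 1) * a) := by
      intro k
      induction k with
      | zero =>
        refine ⟨by simpa using ih, ?_⟩
        have h := card_sphere_prime_sq_mul_of_not_dvd hp2 (not_prime_sq_dvd_mul_sq hp hd hpa)
        have h' := congrArg (Int.cast : ℤ → ℚ) h
        push_cast at h' hχp
        rw [hχp, ih] at h'
        rw [hmul.map_mul_of_coprime (hcop _), hurwitzFactor_prime_pow_succ χ hp, pow_zero,
          hmul.map_one, show d * (p ^ (0 + 1) * a) ^ 2 = p ^ 2 * (d * a ^ 2) by ring, h']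
        ring
      | succ k ihk =>
        refine ⟨ihk.2, ?_⟩
        have h := card_sphere_prime_sq_mul_prime_sq_mul hp2 (d * (p ^ k * a) ^ 2)
        have h' := congrArg (Int.cast : ℤ → ℚ) h
        rw [show p ^ 2 * (d * (p ^ k * a) ^ 2) = d * (p ^ (k + 1) * a) ^ 2 by ring,
          show p ^ 2 * (d * (p ^ (k + 1) * a) ^ 2) = d * (p ^ (k + 1 + 1) * a) ^ 2 by ring] at h'
        push_cast at h'
        rw [h', ihk.1, ihk.2, hmul.map_mul_of_coprime (hcop _), hmul.map_mul_of_coprime (hcop _),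
          hmul.map_mul_of_coprime (hcop _), hurwitzFactor_prime_pow_succ χ hp (k + 1),
          hurwitzFactor_prime_pow_succ χ hp k]
        ring
    exact (key n).1

end SphereCounts

section PrimitivePairs

open Finset

/-- The greatest common divisor of the six coordinates of a pair of integral triples. -/
def pairGcd (w : (ℤ × ℤ × ℤ) × (ℤ × ℤ × ℤ)) : ℕ :=
  w.1.1.natAbs.gcd (w.1.2.1.natAbs.gcd (w.1.2.2.natAbs.gcd
    (w.2.1.natAbs.gcd (w.2.2.1.natAbs.gcd w.2.2.2.natAbs))))

theorem dvd_pairGcd_iff {k : ℕ} {w : (ℤ × ℤ × ℤ) × (ℤ × ℤ × ℤ)} :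
    k ∣ pairGcd w ↔ (k : ℤ) ∣ w.1.1 ∧ (k : ℤ) ∣ w.1.2.1 ∧ (k : ℤ) ∣ w.1.2.2 ∧
      (k : ℤ) ∣ w.2.1 ∧ (k : ℤ) ∣ w.2.2.1 ∧ (k : ℤ) ∣ w.2.2.2 := by
  simp only [pairGcd, Nat.dvd_gcd_iff, Int.natCast_dvd]

theorem pairGcd_smul (k : ℕ) (w : (ℤ × ℤ × ℤ) × (ℤ × ℤ × ℤ)) :
    pairGcd ((k : ℤ) • w) = k * pairGcd w := by
  simp only [pairGcd, Prod.smul_fst, Prod.smul_snd, smul_eq_mul, Int.natAbs_mul,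
    Int.natAbs_natCast, Nat.gcd_mul_left]

theorem exists_eq_pairGcd_smul (w : (ℤ × ℤ × ℤ) × (ℤ × ℤ × ℤ)) :
    ∃ y, w = (pairGcd w : ℤ) • y := by
  obtain ⟨⟨a, ha⟩, ⟨b, hb⟩, ⟨c, hc⟩, ⟨x, hx⟩, ⟨y, hy⟩, ⟨z, hz⟩⟩ :=
    dvd_pairGcd_iff.1 (dvd_refl (pairGcd w))
  exact ⟨((a, b, c), (x, y, z)), Prod.ext (Prod.ext ha (Prod.ext hb hc))
    (Prod.ext hx (Prod.ext hy hz))⟩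

/-- The pairs of integral triples of square length `n` with coprime coordinates. -/
noncomputable def primitivePairs (n : ℕ) : Finset ((ℤ × ℤ × ℤ) × (ℤ × ℤ × ℤ)) :=
  (sphere n ×ˢ sphere n).filter fun w => pairGcd w = 1

theorem mem_primitivePairs {n : ℕ} {w : (ℤ × ℤ × ℤ) × (ℤ × ℤ × ℤ)} :
    w ∈ primitivePairs n ↔ (w.1 ∈ sphere n ∧ w.2 ∈ sphere n) ∧ pairGcd w = 1 := by
  rw [primitivePairs, mem_filter, mem_product]

theorem sq_dvd_of_smul_mem_sphere {k n : ℕ} {v : ℤ × ℤ × ℤ} (h : (k : ℤ) • v ∈ sphere n) :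
    k ^ 2 ∣ n := by
  rw [mem_sphere] at h
  refine Int.natCast_dvd_natCast.1 ⟨v.1 ^ 2 + v.2.1 ^ 2 + v.2.2 ^ 2, ?_⟩
  rw [← h]
  simp only [Prod.smul_fst, Prod.smul_snd, smul_eq_mul]
  push_cast
  ring

theorem dvd_of_sq_dvd_squarefree_mul_sq {d f g : ℕ} (hd : Squarefree d) (hf : f ≠ 0)
    (h : g ^ 2 ∣ d * f ^ 2) : g ∣ f := by
  have hpos : 0 < g.gcd f := Nat.gcd_pos_of_pos_right _ (Nat.pos_of_ne_zero hf)
  obtain ⟨g', f', hcop, hg, hf'⟩ := Nat.exists_coprime g f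
  have h : g' ^ 2 * g.gcd f ^ 2 ∣ d * f' ^ 2 * g.gcd f ^ 2 := by
    rwa [mul_assoc, ← mul_pow, ← mul_pow, ← hg, ← hf']
  have h1 := Nat.dvd_of_mul_dvd_mul_right (pow_pos hpos 2) h
  have h2 := (Nat.Coprime.pow 2 2 hcop).dvd_of_dvd_mul_right h1
  rw [sq] at h2
  have h3 := Nat.isUnit_iff.1 (hd g' h2)
  rw [h3, one_mul] at hg
  rw [hg]
  exact Nat.gcd_dvd_right g f

theorem card_filter_pairGcd_eq {g : ℕ} (hg : g ≠ 0) (n : ℕ) :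
    ((sphere (g ^ 2 * n) ×ˢ sphere (g ^ 2 * n)).filter fun w => pairGcd w = g).card =
      (primitivePairs n).card := by
  have hg' : (g : ℤ) ≠ 0 := by exact_mod_cast hg
  symm
  refine card_bij (fun w _ => (g : ℤ) • w) ?_ ?_ ?_
  · intro w hw
    rw [mem_primitivePairs] at hw
    rw [mem_filter, mem_product, Prod.smul_fst, Prod.smul_snd, smul_mem_sphere hg,
      smul_mem_sphere hg, pairGcd_smul, hw.2, mul_one]
    exact ⟨hw.1, rfl⟩
  · intro a _ b _ h
    exact smul_right_injective _ hg' h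
  · intro w hw
    rw [mem_filter, mem_product] at hw
    obtain ⟨y, hy⟩ := exists_eq_pairGcd_smul w
    rw [hw.2] at hy
    refine ⟨y, ?_, hy.symm⟩
    subst hy
    rw [Prod.smul_fst, Prod.smul_snd, smul_mem_sphere hg, smul_mem_sphere hg, pairGcd_smul] at hw
    exact mem_primitivePairs.2 ⟨hw.1, Nat.eq_of_mul_eq_mul_left (Nat.pos_of_ne_zero hg)
      (by rw [hw.2, mul_one])⟩

theorem sum_card_primitivePairs {d : ℕ} (hd : Squarefree d) {f : ℕ} (hf : f ≠ 0) :
    ∑ c ∈ f.divisors, (primitivePairs (d * c ^ 2)).card = (sphere (d * f ^ 2)).card ^ 2 := by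
  have hmaps : ∀ w ∈ sphere (d * f ^ 2) ×ˢ sphere (d * f ^ 2), pairGcd w ∈ f.divisors := by
    intro w hw
    rw [mem_product] at hw
    obtain ⟨y, hy⟩ := exists_eq_pairGcd_smul w
    rw [Nat.mem_divisors]
    refine ⟨dvd_of_sq_dvd_squarefree_mul_sq hd hf ?_, hf⟩
    exact sq_dvd_of_smul_mem_sphere (v := y.1) (by rw [← Prod.smul_fst, ← hy]; exact hw.1)
  rw [sq, ← card_product, card_eq_sum_card_fiberwise hmaps, ← Nat.sum_div_divisors]
  refine sum_congr rfl fun g hg => ?_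
  have hgf := Nat.dvd_of_mem_divisors hg
  have hg0 : g ≠ 0 := ne_zero_of_dvd_ne_zero hf hgf
  obtain ⟨c, rfl⟩ := hgf
  rw [Nat.mul_div_cancel_left _ (Nat.pos_of_ne_zero hg0), ← card_filter_pairGcd_eq hg0,
    show g ^ 2 * (d * c ^ 2) = d * (g * c) ^ 2 by ring]

theorem card_primitivePairs {d : ℕ} (hd : Squarefree d) {f : ℕ} (hf : Odd f) :
    ((primitivePairs (d * f ^ 2)).card : ℚ) = (sphere d).card ^ 2 *
      primitiveFactor (fun p => ((jacobiSym (-(d : ℤ)) p : ℤ) : ℚ)) f := by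
  induction f using Nat.strong_induction_on with
  | _ f ih =>
    have hf0 : f ≠ 0 := by
      rintro rfl
      exact absurd hf (by decide)
    have h := congrArg (Nat.cast : ℕ → ℚ) (sum_card_primitivePairs hd hf0)
    push_cast at h
    rw [card_sphere_mul_sq hd hf, mul_pow, ← sum_divisors_primitiveFactor, mul_sum,
      ← Nat.insert_self_properDivisors hf0, sum_insert Nat.self_notMem_properDivisors,
      sum_insert Nat.self_notMem_properDivisors] at h
    rwa [sum_congr rfl fun c hc => ih c (Nat.mem_properDivisors.1 hc).2
      (hf.of_dvd_nat (Nat.mem_properDivisors.1 hc).1), add_left_inj] at h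

end PrimitivePairs

section KleinQuadric

open Finset

theorem nat_card_eq_card_of_bijective {α β : Type*} {p : α → Prop} {s : Finset β}
    (φ : {a // p a} → s) (h : Function.Bijective φ) : Nat.card {a // p a} = s.card := by
  rw [Nat.card_eq_of_bijective φ h, Nat.card_eq_fintype_card, Fintype.card_coe]

theorem r3_eq_card_sphere (n : ℕ) : r3 n = (sphere n).card := by
  refine nat_card_eq_card_of_bijective
    (fun v => ⟨(v.1 0, v.1 1, v.1 2), mem_sphere.2 v.2⟩) ⟨?_, ?_⟩
  · intro v w h
    simp only [Subtype.mk.injEq, Prod.mk.injEq] at h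
    ext i
    fin_cases i
    exacts [h.1, h.2.1, h.2.2]
  · rintro ⟨⟨a, b, c⟩, h⟩
    exact ⟨⟨![a, b, c], mem_sphere.1 h⟩, rfl⟩

theorem univ_gcd_eq_one_iff {w : Fin 6 → ℤ} :
    univ.gcd w = 1 ↔ ∀ p : ℕ, p.Prime → ¬ ∀ i, (p : ℤ) ∣ w i := by
  have hdvd : ∀ p : ℕ, (∀ i, (p : ℤ) ∣ w i) ↔ p ∣ (univ.gcd w).natAbs := fun p => by
    rw [← Int.natCast_dvd, Finset.dvd_gcd_iff]
    simp
  have hone : univ.gcd w = 1 ↔ (univ.gcd w).natAbs = 1 := by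
    rw [← Int.isUnit_iff_natAbs_eq, ← normalize_eq_one, Finset.normalize_gcd]
  rw [hone, Nat.eq_one_iff_not_exists_prime_dvd]
  simp only [hdvd]

theorem pairGcd_eq_one_iff {w : (ℤ × ℤ × ℤ) × (ℤ × ℤ × ℤ)} :
    pairGcd w = 1 ↔ ∀ p : ℕ, p.Prime →
      ¬ ((p : ℤ) ∣ w.1.1 ∧ (p : ℤ) ∣ w.1.2.1 ∧ (p : ℤ) ∣ w.1.2.2 ∧
        (p : ℤ) ∣ w.2.1 ∧ (p : ℤ) ∣ w.2.2.1 ∧ (p : ℤ) ∣ w.2.2.2) := by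
  simp only [Nat.eq_one_iff_not_exists_prime_dvd, dvd_pairGcd_iff]

theorem natCast_dvd_of_dvd_add_of_dvd_sub {p : ℕ} (hp : p.Prime) (hp2 : p ≠ 2) {a b : ℤ}
    (h₁ : (p : ℤ) ∣ a + b) (h₂ : (p : ℤ) ∣ a - b) : (p : ℤ) ∣ a ∧ (p : ℤ) ∣ b := by
  have hp' := Nat.prime_iff_prime_int.1 hp
  have h2 : ¬ (p : ℤ) ∣ 2 := fun h => hp2 ((Nat.prime_dvd_prime_iff_eq hp Nat.prime_two).1
    (Int.natCast_dvd_natCast.1 (by exact_mod_cast h)))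
  have ha : (p : ℤ) ∣ 2 * a := by
    rw [show 2 * a = a + b + (a - b) by ring]
    exact dvd_add h₁ h₂
  have hb : (p : ℤ) ∣ 2 * b := by
    rw [show 2 * b = a + b - (a - b) by ring]
    exact dvd_sub h₁ h₂
  exact ⟨(hp'.dvd_or_dvd ha).resolve_left h2, (hp'.dvd_or_dvd hb).resolve_left h2⟩

/-- The coordinatewise congruence modulo two of the members of a pair of triples. -/
def CongrModTwo (w : (ℤ × ℤ × ℤ) × (ℤ × ℤ × ℤ)) : Prop :=
  2 ∣ w.1.1 - w.2.1 ∧ 2 ∣ w.1.2.1 - w.2.2.1 ∧ 2 ∣ w.1.2.2 - w.2.2.2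

instance : DecidablePred CongrModTwo := fun w => by
  unfold CongrModTwo
  infer_instance

theorem Int.sq_emod_four (x : ℤ) : x ^ 2 % 4 = x % 2 := by
  rcases Int.emod_two_eq_zero_or_one x with h | h
  · obtain ⟨k, rfl⟩ := Int.dvd_of_emod_eq_zero h
    rw [show (2 * k) ^ 2 = 4 * k ^ 2 by ring]
    omega
  · obtain ⟨k, hk⟩ : ∃ k, x = 2 * k + 1 := ⟨x / 2, by omega⟩
    subst hk
    rw [show (2 * k + 1) ^ 2 = 4 * (k ^ 2 + k) + 1 by ring]
    omega

theorem card_klein_of_not_four_dvd {n : ℕ} (hn : n % 4 ≠ 0) :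
    Nat.card {w : Fin 6 → ℤ // univ.gcd w = 1 ∧
      w 0 * w 5 - w 1 * w 4 + w 2 * w 3 = 0 ∧
      (w 0) ^ 2 + (w 1) ^ 2 + (w 2) ^ 2 + (w 3) ^ 2 + (w 4) ^ 2 + (w 5) ^ 2 = (n : ℤ)} =
      ((primitivePairs n).filter CongrModTwo).card := by
  let Φ : (Fin 6 → ℤ) → (ℤ × ℤ × ℤ) × (ℤ × ℤ × ℤ) := fun w =>
    ((w 0 + w 5, w 1 - w 4, w 2 + w 3), (w 0 - w 5, w 1 + w 4, w 2 - w 3))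
  have hsphere : ∀ w, ((Φ w).1 ∈ sphere n ∧ (Φ w).2 ∈ sphere n) ↔
      w 0 * w 5 - w 1 * w 4 + w 2 * w 3 = 0 ∧
      (w 0) ^ 2 + (w 1) ^ 2 + (w 2) ^ 2 + (w 3) ^ 2 + (w 4) ^ 2 + (w 5) ^ 2 = (n : ℤ) := by
    intro w
    simp only [mem_sphere, Φ]
    constructor
    · rintro ⟨h₁, h₂⟩
      constructor <;> linarith
    · rintro ⟨h₁, h₂⟩
      constructor <;> linarith
  have hgcd : ∀ w, (Φ w).1 ∈ sphere n → (univ.gcd w = 1 ↔ pairGcd (Φ w) = 1) := by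
    intro w hw
    rw [univ_gcd_eq_one_iff, pairGcd_eq_one_iff]
    refine forall₂_congr fun p hp => not_congr ⟨fun h => ?_, ?_⟩
    · exact ⟨dvd_add (h 0) (h 5), dvd_sub (h 1) (h 4), dvd_add (h 2) (h 3),
        dvd_sub (h 0) (h 5), dvd_add (h 1) (h 4), dvd_sub (h 2) (h 3)⟩
    · rintro ⟨h₁, h₂, h₃, h₄, h₅, h₆⟩
      by_cases hp2 : p = 2
      · exfalso
        subst hp2
        rw [mem_sphere] at hw
        have e₁ := Int.sq_emod_four (Φ w).1.1
        have e₂ := Int.sq_emod_four (Φ w).1.2.1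
        have e₃ := Int.sq_emod_four (Φ w).1.2.2
        omega
      · obtain ⟨a₀, a₅⟩ := natCast_dvd_of_dvd_add_of_dvd_sub hp hp2 h₁ h₄
        obtain ⟨a₁, a₄⟩ := natCast_dvd_of_dvd_add_of_dvd_sub hp hp2 h₅ h₂
        obtain ⟨a₂, a₃⟩ := natCast_dvd_of_dvd_add_of_dvd_sub hp hp2 h₃ h₆
        intro i
        fin_cases i <;> assumption
  have hcongr : ∀ w, CongrModTwo (Φ w) := fun w =>
    ⟨⟨w 5, by simp only [Φ]; ring⟩, ⟨-w 4, by simp only [Φ]; ring⟩, ⟨w 3, by simp only [Φ]; ring⟩⟩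
  refine nat_card_eq_card_of_bijective (fun w => ⟨Φ w.1, ?_⟩) ⟨?_, ?_⟩
  · have hw := (hsphere w.1).2 w.2.2
    exact mem_filter.2 ⟨mem_primitivePairs.2 ⟨hw, (hgcd _ hw.1).1 w.2.1⟩, hcongr _⟩
  · intro v w h
    simp only [Subtype.mk.injEq, Prod.mk.injEq, Φ] at h
    obtain ⟨⟨h₁, h₂, h₃⟩, h₄, h₅, h₆⟩ := h
    ext i
    fin_cases i <;> simp only [Fin.reduceFinMk, Fin.zero_eta, Fin.mk_one] <;> omega
  · rintro ⟨⟨⟨a, b, c⟩, ⟨x, y, z⟩⟩, h⟩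
    obtain ⟨h, ⟨k, hk⟩, ⟨l, hl⟩, ⟨m, hm⟩⟩ := mem_filter.1 h
    have hΦ : Φ ![x + k, y + l, z + m, m, -l, k] = ((a, b, c), (x, y, z)) := by
      simp only [Φ, Prod.mk.injEq, Matrix.cons_val]
      simp only at hk hl hm
      refine ⟨⟨?_, ?_, ?_⟩, ?_, ?_, ?_⟩ <;> omega
    rw [mem_primitivePairs, ← hΦ] at h
    exact ⟨⟨_, (hgcd _ h.1.1).2 h.2, (hsphere _).1 h.1⟩, Subtype.ext hΦ⟩

theorem card_klein_four_mul (n : ℕ) :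
    Nat.card {w : Fin 6 → ℤ // univ.gcd w = 1 ∧
      w 0 * w 5 - w 1 * w 4 + w 2 * w 3 = 0 ∧
      (w 0) ^ 2 + (w 1) ^ 2 + (w 2) ^ 2 + (w 3) ^ 2 + (w 4) ^ 2 + (w 5) ^ 2 =
        ((4 * n : ℕ) : ℤ)} =
      ((primitivePairs n).filter fun w => ¬ CongrModTwo w).card := by
  let Ψ : (ℤ × ℤ × ℤ) × (ℤ × ℤ × ℤ) → Fin 6 → ℤ := fun w =>
    ![w.1.1 + w.2.1, w.2.2.1 + w.1.2.1, w.1.2.2 + w.2.2.2, w.1.2.2 - w.2.2.2,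
      w.2.2.1 - w.1.2.1, w.1.1 - w.2.1]
  have hsphere : ∀ w, (w.1 ∈ sphere n ∧ w.2 ∈ sphere n) ↔
      Ψ w 0 * Ψ w 5 - Ψ w 1 * Ψ w 4 + Ψ w 2 * Ψ w 3 = 0 ∧
      (Ψ w 0) ^ 2 + (Ψ w 1) ^ 2 + (Ψ w 2) ^ 2 + (Ψ w 3) ^ 2 + (Ψ w 4) ^ 2 + (Ψ w 5) ^ 2 =
        ((4 * n : ℕ) : ℤ) := by
    intro w
    simp only [mem_sphere, Ψ, Matrix.cons_val]
    push_cast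
    constructor
    · rintro ⟨h₁, h₂⟩
      constructor <;> linarith
    · rintro ⟨h₁, h₂⟩
      constructor <;> linarith
  have hgcd : ∀ w, univ.gcd (Ψ w) = 1 ↔ pairGcd w = 1 ∧ ¬ CongrModTwo w := by
    intro w
    have hdvd : ∀ p : ℕ, p.Prime → ((∀ i, (p : ℤ) ∣ Ψ w i) ↔ p ∣ pairGcd w ∨
        p = 2 ∧ CongrModTwo w) := by
      intro p hp
      rw [dvd_pairGcd_iff]
      constructor
      · intro h
        have h₀ : (p : ℤ) ∣ w.1.1 + w.2.1 := h 0
        have h₁ : (p : ℤ) ∣ w.2.2.1 + w.1.2.1 := h 1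
        have h₂ : (p : ℤ) ∣ w.1.2.2 + w.2.2.2 := h 2
        have h₃ : (p : ℤ) ∣ w.1.2.2 - w.2.2.2 := h 3
        have h₄ : (p : ℤ) ∣ w.2.2.1 - w.1.2.1 := h 4
        have h₅ : (p : ℤ) ∣ w.1.1 - w.2.1 := h 5
        by_cases hp2 : p = 2
        · subst hp2
          exact Or.inr ⟨rfl, h₅, (dvd_sub_comm).1 h₄, h₃⟩
        · obtain ⟨a₁, a₂⟩ := natCast_dvd_of_dvd_add_of_dvd_sub hp hp2 h₀ h₅
          obtain ⟨a₃, a₄⟩ := natCast_dvd_of_dvd_add_of_dvd_sub hp hp2 h₁ h₄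
          obtain ⟨a₅, a₆⟩ := natCast_dvd_of_dvd_add_of_dvd_sub hp hp2 h₂ h₃
          exact Or.inl ⟨a₁, a₄, a₅, a₂, a₃, a₆⟩
      · rintro (⟨h₁, h₂, h₃, h₄, h₅, h₆⟩ | ⟨rfl, h₁, h₂, h₃⟩) i
        · fin_cases i
          exacts [dvd_add h₁ h₄, dvd_add h₅ h₂, dvd_add h₃ h₆, dvd_sub h₃ h₆, dvd_sub h₅ h₂,
            dvd_sub h₁ h₄]
        · fin_cases i <;> simp only [Fin.reduceFinMk, Fin.zero_eta, Fin.mk_one, Ψ,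
            Matrix.cons_val] <;> push_cast <;> omega
    rw [univ_gcd_eq_one_iff, Nat.eq_one_iff_not_exists_prime_dvd]
    constructor
    · exact fun h => ⟨fun p hp hd => h p hp ((hdvd p hp).2 (Or.inl hd)),
        fun hc => h 2 Nat.prime_two ((hdvd 2 Nat.prime_two).2 (Or.inr ⟨rfl, hc⟩))⟩
    · rintro ⟨h₁, h₂⟩ p hp hd
      exact ((hdvd p hp).1 hd).elim (h₁ p hp) fun h => h₂ h.2
  symm
  rw [← Fintype.card_coe, ← Nat.card_eq_fintype_card]
  refine Nat.card_eq_of_bijective (fun w => ⟨Ψ w.1, ?_⟩) ⟨?_, ?_⟩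
  · obtain ⟨h, hc⟩ := mem_filter.1 w.2
    rw [mem_primitivePairs] at h
    exact ⟨(hgcd _).2 ⟨h.2, hc⟩, (hsphere _).1 h.1⟩
  · rintro ⟨⟨⟨a, b, c⟩, x, y, z⟩, _⟩ ⟨⟨⟨a', b', c'⟩, x', y', z'⟩, _⟩ h
    have h' : ∀ i, Ψ ((a, b, c), x, y, z) i = Ψ ((a', b', c'), x', y', z') i :=
      fun i => congrFun (congrArg Subtype.val h) i
    have h₀ : a + x = a' + x' := h' 0
    have h₁ : y + b = y' + b' := h' 1
    have h₂ : c + z = c' + z' := h' 2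
    have h₃ : c - z = c' - z' := h' 3
    have h₄ : y - b = y' - b' := h' 4
    have h₅ : a - x = a' - x' := h' 5
    simp only [Subtype.mk.injEq, Prod.mk.injEq]
    refine ⟨⟨?_, ?_, ?_⟩, ?_, ?_, ?_⟩ <;> omega
  · rintro ⟨w, hw₁, hw₂, hw₃⟩
    have hsum : (w 0 + w 5) ^ 2 + (w 1 - w 4) ^ 2 + (w 2 + w 3) ^ 2 = 4 * n := by
      push_cast at hw₃
      linarith
    have e₁ := Int.sq_emod_four (w 0 + w 5)
    have e₂ := Int.sq_emod_four (w 1 - w 4)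
    have e₃ := Int.sq_emod_four (w 2 + w 3)
    obtain ⟨k, hk⟩ : ∃ k, w 0 + w 5 = 2 * k := ⟨(w 0 + w 5) / 2, by omega⟩
    obtain ⟨l, hl⟩ : ∃ l, w 1 - w 4 = 2 * l := ⟨(w 1 - w 4) / 2, by omega⟩
    obtain ⟨m, hm⟩ : ∃ m, w 2 + w 3 = 2 * m := ⟨(w 2 + w 3) / 2, by omega⟩
    have hΨ : Ψ ((k, l, m), (w 0 - k, w 1 - l, w 2 - m)) = w := by
      ext i
      fin_cases i <;> simp only [Fin.reduceFinMk, Fin.zero_eta, Fin.mk_one, Ψ,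
        Matrix.cons_val] <;> omega
    rw [← hΨ, hgcd] at hw₁
    rw [← hΨ] at hw₂ hw₃
    exact ⟨⟨_, mem_filter.2 ⟨mem_primitivePairs.2 ⟨(hsphere _).2 ⟨hw₂, hw₃⟩, hw₁.1⟩, hw₁.2⟩⟩,
      Subtype.ext hΨ⟩

end KleinQuadric

section ParityClasses

open Finset

theorem card_filter_congrModTwo_of_three_mod_four {n : ℕ} (hn : n % 4 = 3) :
    ((primitivePairs n).filter CongrModTwo).card = (primitivePairs n).card := by
  rw [filter_true_of_mem]
  intro w hw
  obtain ⟨⟨h₁, h₂⟩, -⟩ := mem_primitivePairs.1 hw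
  rw [mem_sphere] at h₁ h₂
  have e₁ := Int.sq_emod_four w.1.1
  have e₂ := Int.sq_emod_four w.1.2.1
  have e₃ := Int.sq_emod_four w.1.2.2
  have e₄ := Int.sq_emod_four w.2.1
  have e₅ := Int.sq_emod_four w.2.2.1
  have e₆ := Int.sq_emod_four w.2.2.2
  refine ⟨?_, ?_, ?_⟩ <;> omega

/-- The cyclic rotation of the coordinates of the second member of a pair of triples. -/
def rotateSnd : Equiv.Perm ((ℤ × ℤ × ℤ) × (ℤ × ℤ × ℤ)) where
  toFun w := (w.1, (w.2.2.1, w.2.2.2, w.2.1))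
  invFun w := (w.1, (w.2.2.2, w.2.1, w.2.2.1))
  left_inv _ := rfl
  right_inv _ := rfl

theorem rotateSnd_mem_primitivePairs {n : ℕ} {w : (ℤ × ℤ × ℤ) × (ℤ × ℤ × ℤ)} :
    rotateSnd w ∈ primitivePairs n ↔ w ∈ primitivePairs n := by
  have hgcd : pairGcd (rotateSnd w) = pairGcd w := by
    rw [← Nat.dvd_left_iff_eq]
    intro k
    simp only [dvd_pairGcd_iff, rotateSnd, Equiv.coe_fn_mk]
    tauto
  have hsum : w.2.2.1 ^ 2 + w.2.2.2 ^ 2 + w.2.1 ^ 2 = w.2.1 ^ 2 + w.2.2.1 ^ 2 + w.2.2.2 ^ 2 := by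
    ring
  rw [mem_primitivePairs, mem_primitivePairs, hgcd, mem_sphere, mem_sphere, mem_sphere, mem_sphere]
  simp only [rotateSnd, Equiv.coe_fn_mk, hsum]

theorem card_filter_rotateSnd (n : ℕ) (P : (ℤ × ℤ × ℤ) × (ℤ × ℤ × ℤ) → Prop)
    [DecidablePred P] :
    ((primitivePairs n).filter fun w => P (rotateSnd w)).card =
      ((primitivePairs n).filter P).card :=
  card_equiv rotateSnd fun w => by
    rw [mem_filter, mem_filter, rotateSnd_mem_primitivePairs]

theorem sum_rotations_eq_one {a b c x y z s : ℤ} (ha : a = 0 ∨ a = 1) (hb : b = 0 ∨ b = 1)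
    (hc : c = 0 ∨ c = 1) (hx : x = 0 ∨ x = 1) (hy : y = 0 ∨ y = 1) (hz : z = 0 ∨ z = 1)
    (hu : a + b + c = s) (hv : x + y + z = s) (hs : s = 1 ∨ s = 2) :
    (if a = x ∧ b = y ∧ c = z then 1 else 0) + (if a = y ∧ b = z ∧ c = x then 1 else 0) +
      (if a = z ∧ b = x ∧ c = y then 1 else 0) = 1 := by
  subst hu
  rcases ha with rfl | rfl <;> rcases hb with rfl | rfl <;> rcases hc with rfl | rfl <;>
    rcases hx with rfl | rfl <;> rcases hy with rfl | rfl <;> rcases hz with rfl | rfl <;>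
    first | rfl | omega

theorem three_mul_card_filter_congrModTwo {n : ℕ} (hn : n % 4 = 1 ∨ n % 4 = 2) :
    3 * ((primitivePairs n).filter CongrModTwo).card = (primitivePairs n).card := by
  have h₁ := card_filter_rotateSnd n CongrModTwo
  have h₂ := card_filter_rotateSnd n fun w => CongrModTwo (rotateSnd w)
  have h : ((primitivePairs n).filter CongrModTwo).card +
      ((primitivePairs n).filter fun w => CongrModTwo (rotateSnd w)).card +
      ((primitivePairs n).filter fun w => CongrModTwo (rotateSnd (rotateSnd w))).card =
      (primitivePairs n).card := by
    rw [card_filter, card_filter, card_filter, ← sum_add_distrib, ← sum_add_distrib,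
      card_eq_sum_ones]
    refine sum_congr rfl fun w hw => ?_
    obtain ⟨⟨h₁, h₂⟩, -⟩ := mem_primitivePairs.1 hw
    rw [mem_sphere] at h₁ h₂
    have e₁ := Int.sq_emod_four w.1.1
    have e₂ := Int.sq_emod_four w.1.2.1
    have e₃ := Int.sq_emod_four w.1.2.2
    have e₄ := Int.sq_emod_four w.2.1
    have e₅ := Int.sq_emod_four w.2.2.1
    have e₆ := Int.sq_emod_four w.2.2.2
    have hc : ∀ v, CongrModTwo v ↔ v.1.1 % 2 = v.2.1 % 2 ∧ v.1.2.1 % 2 = v.2.2.1 % 2 ∧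
        v.1.2.2 % 2 = v.2.2.2 % 2 := fun v =>
      and_congr (by omega) (and_congr (by omega) (by omega))
    have hu : w.1.1 % 2 + w.1.2.1 % 2 + w.1.2.2 % 2 = n % 4 := by omega
    have hv : w.2.1 % 2 + w.2.2.1 % 2 + w.2.2.2 % 2 = n % 4 := by omega
    have hn' : (n : ℤ) % 4 = 1 ∨ (n : ℤ) % 4 = 2 := by omega
    simp only [hc, rotateSnd, Equiv.coe_fn_mk]
    exact sum_rotations_eq_one (Int.emod_two_eq_zero_or_one _) (Int.emod_two_eq_zero_or_one _)
      (Int.emod_two_eq_zero_or_one _) (Int.emod_two_eq_zero_or_one _)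
      (Int.emod_two_eq_zero_or_one _) (Int.emod_two_eq_zero_or_one _) hu hv hn'
  omega

end ParityClasses

/-- the explicit formula for `r₂₄(d)`, for
`d = d₀·4ᵉ·f²` with `d₀` squarefree, `f` odd, `e ∈ {0,1}` and
`d mod 16 ∉ {0,7,12,15}`. -/
theorem r24_formula (d d₀ f e : ℕ) (hd : 0 < d)
    (hD : ¬(d % 16 = 0 ∨ d % 16 = 7 ∨ d % 16 = 12 ∨ d % 16 = 15))
    (hfact : d = d₀ * 4 ^ e * f ^ 2) (hsq : Squarefree d₀) (hf : Odd f)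
    (he : e ≤ 1) :
    r24 d =
      (if d % 4 = 3 then (1 / 2 : ℚ) else if d % 4 = 0 then 1 / 3 else 1 / 6) *
        (r3 d₀ : ℚ) ^ 2 * (f : ℚ) ^ 2 *
        ∑ c ∈ f.divisors,
          ((2 ^ c.primeFactors.card : ℚ) / (c : ℚ)) *
            ∏ p ∈ f.primeFactors,
              (1 - (p : ℚ)⁻¹ * ((jacobiSym (-(d₀ : ℤ)) p : ℤ) : ℚ)) ^
                (if p ∣ f / c then 2 else 1) := by
  have hf0 : f ≠ 0 := by
    rintro rfl
    exact absurd hf (by decide)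
  have hmain := card_primitivePairs hsq hf
  rw [primitiveFactor_eq _ hf0, ← r3_eq_card_sphere] at hmain
  rw [mul_assoc, mul_assoc, ← hmain]
  have h₀ : (d₀ * f ^ 2) % 4 ≠ 0 := by
    intro h
    have hcop : Nat.Coprime (2 ^ 2) (f ^ 2) := Nat.Coprime.pow 2 2 hf.coprime_two_left
    have hdvd : 2 * 2 ∣ d₀ := hcop.dvd_of_dvd_mul_right (Nat.dvd_of_mod_eq_zero h)
    exact absurd (Nat.isUnit_iff.1 (hsq 2 hdvd)) (by decide)
  obtain rfl | rfl : e = 0 ∨ e = 1 := by omega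
  · have hd' : d₀ * f ^ 2 = d := by rw [hfact, pow_zero, mul_one]
    rw [hd'] at h₀ ⊢
    rw [r24, card_klein_of_not_four_dvd h₀]
    by_cases h3 : d % 4 = 3
    · rw [card_filter_congrModTwo_of_three_mod_four h3, if_pos h3]
      ring
    · have h := congrArg (Nat.cast : ℕ → ℚ)
        (three_mul_card_filter_congrModTwo (n := d) (by omega))
      rw [if_neg h3, if_neg h₀, ← h]
      push_cast
      ring
  · have hd' : d = 4 * (d₀ * f ^ 2) := by rw [hfact]; ring
    generalize d₀ * f ^ 2 = m at h₀ hd' ⊢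
    subst hd'
    have h := congrArg (Nat.cast : ℕ → ℚ) (three_mul_card_filter_congrModTwo (n := m) (by omega))
    have h' := congrArg (Nat.cast : ℕ → ℚ)
      (Finset.card_filter_add_card_filter_not (s := primitivePairs m) CongrModTwo)
    rw [r24, card_klein_four_mul, if_neg (by omega), if_pos (by omega)]
    push_cast at h h'
    linarith
end

section
/- Let p > 1 be a real number, let ε ∈ {−1, 0, 1}, set A = 1 − ε/p, and let y be a real number with |py| < 1. Then the series 1 + p²y²·A·(A + 2/p) + Σ_{k=2}^∞ A·p^{2k}·y^{2k}·[A + (2A/p)·(1 − p^{1−k})/(1 − p⁻¹) + 2/p^k] converges and its sum equals P(y,ε) = (1 + (ε² − 2ε + p − 2εp)y² + ε²py⁴)/((1 − py²)(1 − p²y²)). -/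
/-- `P(y, ε) = (1 + (ε² − 2ε + p − 2εp)y² + ε²py⁴)/((1 − py²)(1 − p²y²))`. -/
noncomputable def Pp (p y ε : ℝ) : ℝ :=
  (1 + (ε ^ 2 - 2 * ε + p - 2 * ε * p) * y ^ 2 + ε ^ 2 * p * y ^ 4) /
    ((1 - p * y ^ 2) * (1 - p ^ 2 * y ^ 2))

/-- with `A = 1 − ε/p` and `|py| < 1`, the series
`1 + p²y²A(A + 2/p) + Σ_{k≥2} A p^{2k} y^{2k} [A + (2A/p)(1 − p^{1−k})/(1 − p⁻¹) + 2/p^k]`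
converges to `P(y, ε)`. -/
theorem series_sums_to_Pp (p : ℝ) (hp : 1 < p) (ε : ℝ)
    (hε : ε = -1 ∨ ε = 0 ∨ ε = 1) (y : ℝ) (hy : |p * y| < 1) :
    Summable (fun k : ℕ =>
      (1 - ε / p) * p ^ (2 * (k + 2)) * y ^ (2 * (k + 2)) *
        ((1 - ε / p) +
          (2 * (1 - ε / p) / p) *
            ((1 - p ^ ((1 : ℤ) - ((k : ℤ) + 2))) / (1 - p⁻¹)) +
          2 / p ^ (k + 2))) ∧
    1 + p ^ 2 * y ^ 2 * (1 - ε / p) * ((1 - ε / p) + 2 / p) +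
        (∑' k : ℕ,
          (1 - ε / p) * p ^ (2 * (k + 2)) * y ^ (2 * (k + 2)) *
            ((1 - ε / p) +
              (2 * (1 - ε / p) / p) *
                ((1 - p ^ ((1 : ℤ) - ((k : ℤ) + 2))) / (1 - p⁻¹)) +
              2 / p ^ (k + 2))) =
      Pp p y ε := by
  have hp0 : p ≠ 0 := by positivity
  have hp1 : p - 1 ≠ 0 := by linarith
  have hinv : 1 - p⁻¹ = (p - 1) / p := by field_simp
  have hX1 : p ^ 2 * y ^ 2 < 1 := by
    rw [← mul_pow]
    exact (sq_lt_one_iff_abs_lt_one _).2 hy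
  have hX0 : 0 ≤ p ^ 2 * y ^ 2 := by positivity
  have hY0 : 0 ≤ p * y ^ 2 := by positivity
  have hY1 : p * y ^ 2 < 1 := by nlinarith
  have hX : 1 - p ^ 2 * y ^ 2 ≠ 0 := by linarith
  have hY : 1 - p * y ^ 2 ≠ 0 := by linarith
  have hs := ((hasSum_geometric_of_lt_one hX0 hX1).mul_left
      ((1 - ε / p) ^ 2 * ((p + 1) / (p - 1)) * (p ^ 2 * y ^ 2) ^ 2)).add
    ((hasSum_geometric_of_lt_one hY0 hY1).mul_left
      ((1 - ε / p) * (2 - 2 * (1 - ε / p) * p / (p - 1)) * (p * y ^ 2) ^ 2))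
  have hterm : ∀ k : ℕ,
      (1 - ε / p) * p ^ (2 * (k + 2)) * y ^ (2 * (k + 2)) *
        ((1 - ε / p) +
          (2 * (1 - ε / p) / p) *
            ((1 - p ^ ((1 : ℤ) - ((k : ℤ) + 2))) / (1 - p⁻¹)) +
          2 / p ^ (k + 2)) =
      (1 - ε / p) ^ 2 * ((p + 1) / (p - 1)) * (p ^ 2 * y ^ 2) ^ 2 *
          (p ^ 2 * y ^ 2) ^ k +
        (1 - ε / p) * (2 - 2 * (1 - ε / p) * p / (p - 1)) * (p * y ^ 2) ^ 2 *
          (p * y ^ 2) ^ k := by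
    intro k
    have hz : p ^ ((1 : ℤ) - ((k : ℤ) + 2)) = (p ^ k * p)⁻¹ := by
      rw [show (1 : ℤ) - ((k : ℤ) + 2) = -((k + 1 : ℕ) : ℤ) by push_cast; ring,
        zpow_neg, zpow_natCast, pow_succ]
    have hq : p ^ k ≠ 0 := pow_ne_zero _ hp0
    have hpp : p ^ (2 * (k + 2)) = (p ^ k) ^ 2 * p ^ 4 := by ring
    have hyy : y ^ (2 * (k + 2)) = (y ^ 2) ^ k * y ^ 4 := by ring
    have hXk : (p ^ 2 * y ^ 2) ^ k = (p ^ k) ^ 2 * (y ^ 2) ^ k := by ring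
    rw [hz, hinv, hpp, hyy, hXk, mul_pow p (y ^ 2) k, pow_add p k 2]
    generalize p ^ k = q at hq ⊢
    generalize (y ^ 2) ^ k = z
    generalize 1 - ε / p = A
    field_simp
    ring
  simp_rw [hterm]
  refine ⟨hs.summable, ?_⟩
  rw [hs.tsum_eq, Pp]
  field_simp
  ring
end
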